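/- Suppose ℓ is in the limit-point case at both endpoints a and b. Then the operator S in L²(𝕋_κ; r dσ_κ), with domain consisting of all equivalence classes having a representative pair (u, u^[1]) ∈ D_ℓ² and acting by S[u] = [ℓu], is well defined (the class [ℓu] does not depend on the chosen representative pair), densely defined, and self-adjoint. -/

import Mathlib

open MeasureTheory Set Filter
open scoped ENNReal NNReal Classical

/-- Forward shift of a time scale. -/
noncomputable def tsSigma (T : Set ℝ) (t : ℝ) : ℝ :=
  if ({s | s ∈ T ∧ t < s}).Nonempty then sInf {s | s ∈ T ∧ t < s} else sSup T

/-- Backward shift of a time scale. -/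
noncomputable def tsRho (T : Set ℝ) (t : ℝ) : ℝ :=
  if ({s | s ∈ T ∧ s < t}).Nonempty then sSup {s | s ∈ T ∧ s < t} else sInf T

/-- `𝕋_κ` : the time scale with the left endpoint removed if it is finite and right-scattered. -/
noncomputable def tsKappa (T : Set ℝ) : Set ℝ :=
  if BddBelow T ∧ sInf T < tsSigma T (sInf T) then T \ {sInf T} else T

/-- Extension `p̄` of a function on `𝕋_κ` to all of `ℝ`. -/
noncomputable def extK (T : Set ℝ) (p : ℝ → ℂ) (t : ℝ) : ℂ :=
  if t ∈ tsKappa T then p t else p (tsSigma (tsKappa T) t)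

/-- Coercion of a real-valued coefficient to a complex-valued one. -/
def cR (f : ℝ → ℝ) : ℝ → ℂ := fun t => (f t : ℂ)

/-- `(u, u^[1])` is an integrated pair with density `h` against the measure `μ = dσ_κ`. -/
def IsPair (T : Set ℝ) (μ : Measure ℝ) (p : ℝ → ℂ) (u u1 h : ℝ → ℂ) : Prop :=
  ∀ c x : ℝ, c ≤ x →
    u x = u c + ∫ t in c..x, u1 t / extK T p t ∧
    u1 x = u1 c + ∫ t in Set.Ioc c x, h t ∂μ

/-- `(u, u^[1])` is a solution pair of `(ℓ - z) u = g`. -/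
def IsSLSol (T : Set ℝ) (μ : Measure ℝ) (p r q : ℝ → ℂ) (z : ℂ) (g : ℝ → ℂ)
    (u u1 : ℝ → ℂ) : Prop :=
  IsPair T μ p u u1 (fun t => (q t - z * r t) * u t - r t * g t)

/-- Wronskian of two pairs. -/
def Wr (u u1 v v1 : ℝ → ℂ) (x : ℝ) : ℂ := u x * v1 x - u1 x * v x

/-- The integrand `|u|² r` as an `ℝ≥0∞`-valued function. -/
noncomputable def sqWeight (r : ℝ → ℝ) (u : ℝ → ℂ) (t : ℝ) : ℝ≥0∞ :=
  ((‖u t‖₊ : ℝ≥0∞)) ^ 2 * ENNReal.ofReal (r t)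

/-- `u` lies in `L²` near the left endpoint `a`. -/
def L2NearLeft (T : Set ℝ) (μ : Measure ℝ) (r : ℝ → ℝ) (u : ℝ → ℂ) : Prop :=
  ∀ c ∈ tsKappa T, ∫⁻ t in {t | (∃ s ∈ T, s < t) ∧ t ≤ c} ∩ tsKappa T, sqWeight r u t ∂μ < ∞

/-- `u` lies in `L²` near the right endpoint `b`. -/
def L2NearRight (T : Set ℝ) (μ : Measure ℝ) (r : ℝ → ℝ) (u : ℝ → ℂ) : Prop :=
  ∀ c ∈ tsKappa T, ∫⁻ t in {t | c ≤ t ∧ ∃ s ∈ T, t < s} ∩ tsKappa T, sqWeight r u t ∂μ < ∞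

/-- `ℓ` is in the limit-circle case at the left endpoint. -/
def LimitCircleLeft (T : Set ℝ) (μ : Measure ℝ) (p r q : ℝ → ℝ) : Prop :=
  ∀ z : ℂ, ∀ u u1 : ℝ → ℂ, IsSLSol T μ (cR p) (cR r) (cR q) z 0 u u1 → L2NearLeft T μ r u

/-- `ℓ` is in the limit-point case at the left endpoint. -/
def LimitPointLeft (T : Set ℝ) (μ : Measure ℝ) (p r q : ℝ → ℝ) : Prop :=
  ∀ z : ℂ, ∃ u u1 : ℝ → ℂ, IsSLSol T μ (cR p) (cR r) (cR q) z 0 u u1 ∧ ¬ L2NearLeft T μ r u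

/-- `ℓ` is in the limit-circle case at the right endpoint. -/
def LimitCircleRight (T : Set ℝ) (μ : Measure ℝ) (p r q : ℝ → ℝ) : Prop :=
  ∀ z : ℂ, ∀ u u1 : ℝ → ℂ, IsSLSol T μ (cR p) (cR r) (cR q) z 0 u u1 → L2NearRight T μ r u

/-- `ℓ` is in the limit-point case at the right endpoint. -/
def LimitPointRight (T : Set ℝ) (μ : Measure ℝ) (p r q : ℝ → ℝ) : Prop :=
  ∀ z : ℂ, ∃ u u1 : ℝ → ℂ, IsSLSol T μ (cR p) (cR r) (cR q) z 0 u u1 ∧ ¬ L2NearRight T μ r u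

/-- The action `ℓ u = (-h + q u)/r` of the differential expression on a pair with density `h`. -/
noncomputable def ellApply (r q : ℝ → ℝ) (h u : ℝ → ℂ) (t : ℝ) : ℂ :=
  (-h t + (q t : ℂ) * u t) / (r t : ℂ)

/-- Membership in `L²(𝕋_κ; r dσ_κ)`. -/
def MemL2T (T : Set ℝ) (μ : Measure ℝ) (r : ℝ → ℝ) (u : ℝ → ℂ) : Prop :=
  ∫⁻ t in tsKappa T, sqWeight r u t ∂μ < ∞

/-- The pair `(u, u^[1])` with density `h` belongs to `D_ℓ²`. -/
def MemD2 (T : Set ℝ) (μ : Measure ℝ) (p r q : ℝ → ℝ) (u u1 h : ℝ → ℂ) : Prop :=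
  LocallyIntegrable h μ ∧ IsPair T μ (cR p) u u1 h ∧ MemL2T T μ r u ∧
    MemL2T T μ r (ellApply r q h u)

/-- The filter `x ↓ a`, `x ∈ 𝕋`. -/
noncomputable def leftLimFilter (T : Set ℝ) : Filter ℝ :=
  if BddBelow T then nhdsWithin (sInf T) T else Filter.atBot ⊓ Filter.principal T

/-- The filter `x ↑ b`, `x ∈ 𝕋`. -/
noncomputable def rightLimFilter (T : Set ℝ) : Filter ℝ :=
  if BddAbove T then nhdsWithin (sSup T) T else Filter.atTop ⊓ Filter.principal T

/-- The measure `r dσ_κ` on `𝕋_κ`, giving the Hilbert space `L²(𝕋_κ; r dσ_κ)`. -/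
noncomputable def wM (T : Set ℝ) (μ : Measure ℝ) (r : ℝ → ℝ) : Measure ℝ :=
  (μ.restrict (tsKappa T)).withDensity fun t => ENNReal.ofReal (r t)



theorem hilb_main {E : Type*} [NormedAddCommGroup E] [InnerProductSpace ℂ E] [CompleteSpace E]
    (Γ : Submodule ℂ (E × E)) (Γ0 : Set (E × E)) (h0 : Γ0 ⊆ Γ)
    (ha : ∀ f g F G : E, (f, g) ∈ Γ0 → (F, G) ∈ Γ → inner ℂ g F = inner ℂ f G)
    (hb : ∀ F G : E, (∀ f g : E, (f, g) ∈ Γ0 → inner ℂ g F = inner ℂ f G) → (F, G) ∈ Γ)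
    (hc1 : ∀ F : E, (F, Complex.I • F) ∈ Γ → F = 0)
    (hc2 : ∀ F : E, (F, (-Complex.I) • F) ∈ Γ → F = 0)
    (hd : ∀ G : E, ((0 : E), G) ∈ Γ → G = 0) :
    ∃ S : E →ₗ.[ℂ] E, Dense (S.domain : Set E) ∧ IsSelfAdjoint S ∧ S.graph = Γ := by
  have hgr : Γ.toLinearPMap.graph = Γ := by
    apply Submodule.toLinearPMap_graph_eq
    rintro ⟨x, y⟩ hx hx0
    simp only at hx0
    subst hx0
    exact hd y hx
  have hdense : Dense (Γ.toLinearPMap.domain : Set E) := by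
    rw [Submodule.dense_iff_topologicalClosure_eq_top, Submodule.topologicalClosure_eq_top_iff,
      Submodule.eq_bot_iff]
    intro k hk
    apply hd
    apply hb
    intro f g hfg
    have hf : f ∈ Γ.toLinearPMap.domain :=
      LinearPMap.mem_domain_iff.2 ⟨g, by rw [hgr]; exact h0 hfg⟩
    rw [(Submodule.mem_orthogonal _ _).1 hk f hf, inner_zero_right]
  -- A ⊆ Γ
  have hAG : ∀ f g : E, (∀ F G : E, (F, G) ∈ Γ → inner ℂ G f = inner ℂ F g) → (f, g) ∈ Γ := by
    intro f g h
    exact hb f g (fun f' g' h' => h f' g' (h0 h'))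
  let A : Submodule ℂ (E × E) := Γ.adjoint
  have hA : ∀ f g : E, (f, g) ∈ A ↔ ∀ F G : E, (F, G) ∈ Γ → inner ℂ G f = inner ℂ F g := by
    intro f g
    simp only [A, Submodule.mem_adjoint_iff, sub_eq_zero]
  have hA0 : ∀ f g : E, (f, g) ∈ Γ0 → (f, g) ∈ A := by
    intro f g h
    rw [hA]
    intro F G hFG
    have := ha f g F G h hFG
    rw [← inner_conj_symm, ← inner_conj_symm F g, this]
  have hAle : ∀ f g : E, (f, g) ∈ A → (f, g) ∈ Γ := fun f g h => hAG f g ((hA f g).1 h)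
  let L : E × E →L[ℂ] E := ContinuousLinearMap.snd ℂ E E - Complex.I • ContinuousLinearMap.fst ℂ E E
  have hL : ∀ f g, L (f, g) = g - Complex.I • f := fun f g => rfl
  have hclosedA : IsClosed (A : Set (E × E)) := by
    have : (A : Set (E × E)) = ⋂ x : Γ, {y : E × E | inner ℂ x.1.2 y.1 = inner ℂ x.1.1 y.2} := by
      ext ⟨f, g⟩
      simp only [SetLike.mem_coe, hA, mem_iInter, mem_ofPred_eq, Subtype.forall, Prod.forall]
    rw [this]
    refine isClosed_iInter fun x => isClosed_eq ?_ ?_ <;> fun_prop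
  have hnorm : ∀ f g : E, (f, g) ∈ A → ‖g - Complex.I • f‖ ^ 2 = ‖g‖ ^ 2 + ‖f‖ ^ 2 := by
    intro f g h
    have h1 : inner ℂ g f = inner ℂ f g := (hA f g).1 h f g (hAle f g h)
    have h2 : (inner ℂ g f : ℂ).im = 0 := by
      rw [← Complex.conj_eq_iff_im, inner_conj_symm, h1]
    rw [@norm_sub_sq ℂ]
    simp [inner_smul_right, h2, norm_smul]
  have hanti : AntilipschitzWith 1 (fun x : A => L x) := by
    refine AddMonoidHomClass.antilipschitz_of_bound (L.comp A.subtypeL) ?_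
    rintro ⟨⟨f, g⟩, h⟩
    have := hnorm f g h
    change ‖(f, g)‖ ≤ _ * ‖L (f, g)‖
    rw [hL, Prod.norm_def]
    simp only [NNReal.coe_one, one_mul, sup_le_iff]
    constructor <;> refine (sq_le_sq₀ (norm_nonneg _) (norm_nonneg _)).1 ?_ <;>
      nlinarith [sq_nonneg ‖f‖, sq_nonneg ‖g‖]
  have hrange : LinearMap.range (L.comp A.subtypeL).toLinearMap = ⊤ := by
    have : CompleteSpace A := hclosedA.completeSpace_coe
    have hcl : IsClosed (LinearMap.range (L.comp A.subtypeL).toLinearMap : Set E) := by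
      have := hanti.isClosed_range (L.comp A.subtypeL).uniformContinuous
      rw [LinearMap.coe_range]
      exact this
    have : CompleteSpace (LinearMap.range (L.comp A.subtypeL).toLinearMap) := hcl.completeSpace_coe
    rw [← Submodule.orthogonal_eq_bot_iff, Submodule.eq_bot_iff]
    intro k hk
    apply hc2
    apply hb
    intro f g hfg
    have := (Submodule.mem_orthogonal _ _).1 hk (g - Complex.I • f) ⟨⟨(f, g), hA0 f g hfg⟩, rfl⟩
    rw [inner_sub_left, inner_smul_left, sub_eq_zero] at this
    rw [this, inner_smul_right]
    simp
  have hGA : ∀ F G : E, (F, G) ∈ Γ → (F, G) ∈ A := by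
    intro F G h
    have : G - Complex.I • F ∈ LinearMap.range (L.comp A.subtypeL).toLinearMap := by
      rw [hrange]; trivial
    obtain ⟨⟨⟨f, g⟩, hfg⟩, e⟩ := this
    change g - Complex.I • f = G - Complex.I • F at e
    have h1 := Γ.sub_mem h (hAle f g hfg)
    have h2 : G - g = Complex.I • (F - f) := by
      rw [smul_sub]
      rw [sub_eq_sub_iff_add_eq_add] at e ⊢
      rw [add_comm (Complex.I • F), e]
    simp only [Prod.mk_sub_mk] at h1
    have h3 := hc1 (F - f) (h2 ▸ h1)
    rw [h3, smul_zero] at h2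
    rw [sub_eq_zero] at h2 h3
    rw [h2, h3]; exact hfg
  refine ⟨Γ.toLinearPMap, hdense, ?_, hgr⟩
  rw [LinearPMap.isSelfAdjoint_def]
  apply LinearPMap.eq_of_eq_graph
  rw [LinearPMap.adjoint_graph_eq_graph_adjoint hdense, hgr]
  apply le_antisymm
  · rintro ⟨f, g⟩ h; exact hAle f g h
  · rintro ⟨f, g⟩ h; exact hGA f g h

theorem li_int {μ : Measure ℝ} {F : Type*} [NormedAddCommGroup F] {f : ℝ → F}
    (hf : LocallyIntegrable f μ) (a b : ℝ) : IntervalIntegrable f μ a b := by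
  rw [intervalIntegrable_iff]
  exact (hf.integrableOn_isCompact isCompact_uIcc).mono_set uIoc_subset_uIcc

theorem li_Icc {μ : Measure ℝ} {F : Type*} [NormedAddCommGroup F] {f : ℝ → F}
    (hf : LocallyIntegrable f μ) (a b : ℝ) : IntegrableOn f (Icc a b) μ :=
  hf.integrableOn_isCompact isCompact_Icc

theorem li_Ioc {μ : Measure ℝ} {F : Type*} [NormedAddCommGroup F] {f : ℝ → F}
    (hf : LocallyIntegrable f μ) (a b : ℝ) : IntegrableOn f (Ioc a b) μ :=
  (li_Icc hf a b).mono_set Ioc_subset_Icc_self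

theorem li_of_Icc {μ : Measure ℝ} {F : Type*} [NormedAddCommGroup F] {f : ℝ → F}
    (h : ∀ a b : ℝ, IntegrableOn f (Icc a b) μ) : LocallyIntegrable f μ := by
  rw [locallyIntegrable_iff]
  intro K hK
  obtain ⟨a, ha⟩ := hK.bddBelow
  obtain ⟨b, hb⟩ := hK.bddAbove
  exact (h a b).mono_set fun x hx => ⟨ha hx, hb hx⟩

/-- locally bounded times locally integrable -/
theorem li_mul {μ : Measure ℝ} {f g : ℝ → ℂ} (hf : AEStronglyMeasurable f μ)
    (hb : ∀ a b : ℝ, ∃ C : ℝ, ∀ x ∈ Icc a b, ‖f x‖ ≤ C) (hg : LocallyIntegrable g μ) :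
    LocallyIntegrable (fun t => f t * g t) μ := by
  apply li_of_Icc
  intro a b
  obtain ⟨C, hC⟩ := hb a b
  refine Integrable.bdd_mul (c := C) (li_Icc hg a b) hf.restrict ?_
  exact (ae_restrict_iff' measurableSet_Icc).2 (Eventually.of_forall hC)

theorem cont_lb {f : ℝ → ℂ} (hf : Continuous f) (a b : ℝ) :
    ∃ C : ℝ, ∀ x ∈ Icc a b, ‖f x‖ ≤ C :=
  isCompact_Icc.exists_bound_of_continuousOn hf.continuousOn

theorem li_cmul {μ : Measure ℝ} {f g : ℝ → ℂ} (hf : Continuous f) (hg : LocallyIntegrable g μ) :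
    LocallyIntegrable (fun t => f t * g t) μ :=
  li_mul hf.aestronglyMeasurable (cont_lb hf) hg

theorem li_mulc {μ : Measure ℝ} {f g : ℝ → ℂ} (hf : Continuous f) (hg : LocallyIntegrable g μ) :
    LocallyIntegrable (fun t => g t * f t) μ := by
  simpa only [mul_comm] using li_cmul hf hg

theorem prim_meas {μ : Measure ℝ} [IsLocallyFiniteMeasure μ] {h : ℝ → ℂ}
    (hh : LocallyIntegrable h μ) (c : ℝ) :
    StronglyMeasurable (fun t => ∫ s in c..t, h s ∂μ) := by
  have hm := hh.aestronglyMeasurable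
  have e : (fun t => ∫ s in c..t, h s ∂μ) = fun t =>
      (∫ s, ({p : ℝ × ℝ | c < p.2 ∧ p.2 ≤ p.1}.indicator (fun p => hm.mk h p.2) (t, s)) ∂μ) -
      (∫ s, ({p : ℝ × ℝ | p.1 < p.2 ∧ p.2 ≤ c}.indicator (fun p => hm.mk h p.2) (t, s)) ∂μ) := by
    ext t
    rw [intervalIntegral]
    congr 1
    · rw [← integral_indicator measurableSet_Ioc]
      refine integral_congr_ae ?_
      filter_upwards [hm.ae_eq_mk] with s hs
      simp only [indicator, mem_Ioc, mem_ofPred_eq, hs]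
    · rw [← integral_indicator measurableSet_Ioc]
      refine integral_congr_ae ?_
      filter_upwards [hm.ae_eq_mk] with s hs
      simp only [indicator, mem_Ioc, mem_ofPred_eq, hs]
  rw [e]
  have hmk : StronglyMeasurable (fun p : ℝ × ℝ => hm.mk h p.2) :=
    hm.stronglyMeasurable_mk.comp_measurable measurable_snd
  refine StronglyMeasurable.sub ?_ ?_
  · refine StronglyMeasurable.integral_prod_right (f := fun t s => ({p : ℝ × ℝ | c < p.2 ∧ p.2 ≤ p.1}.indicator (fun p => hm.mk h p.2) (t, s))) ?_
    refine hmk.indicator ?_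
    exact (measurableSet_lt measurable_const measurable_snd).inter
      (measurableSet_le measurable_snd measurable_fst)
  · refine StronglyMeasurable.integral_prod_right (f := fun t s => ({p : ℝ × ℝ | p.1 < p.2 ∧ p.2 ≤ c}.indicator (fun p => hm.mk h p.2) (t, s))) ?_
    refine hmk.indicator ?_
    exact (measurableSet_lt measurable_fst measurable_snd).inter
      (measurableSet_le measurable_snd measurable_const)

theorem prim_lb {μ : Measure ℝ} {h : ℝ → ℂ}
    (hh : LocallyIntegrable h μ) (c a b : ℝ) :
    ∃ C : ℝ, ∀ t ∈ Icc a b, ‖∫ s in c..t, h s ∂μ‖ ≤ C := by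
  refine ⟨∫ s in Icc (min a c) (max b c), ‖h s‖ ∂μ, fun t ht => ?_⟩
  refine (intervalIntegral.norm_integral_le_integral_norm_uIoc).trans ?_
  refine setIntegral_mono_set (li_Icc hh _ _).norm (Eventually.of_forall fun _ => norm_nonneg _) ?_
  refine LE.le.eventuallyLE ?_
  intro s hs
  rw [uIoc, mem_Ioc] at hs
  refine ⟨le_trans ?_ hs.1.le, hs.2.trans ?_⟩
  · rw [min_comm a c]; exact min_le_min_left _ ht.1
  · rw [max_comm b c]; exact max_le_max_left _ ht.2

theorem ibp_aux {μ : Measure ℝ} [IsLocallyFiniteMeasure μ] {α h : ℝ → ℂ}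
    (hα : LocallyIntegrable α volume) (hh : LocallyIntegrable h μ) (c x : ℝ) :
    (∫ s in Ioc c x, α s) * (∫ t in Ioc c x, h t ∂μ) =
      (∫ s in Ioc c x, α s * (∫ t in Ioc c s, h t ∂μ)) +
      ∫ t in Ioc c x, (∫ s in Ioc c t, α s) * h t ∂μ := by
  rw [← integral_prod_mul]
  set m := (volume.restrict (Ioc c x)).prod (μ.restrict (Ioc c x)) with hm
  have hint : Integrable (fun z : ℝ × ℝ => α z.1 * h z.2) m :=
    Integrable.mul_prod (li_Ioc hα c x) (li_Ioc hh c x)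
  have hD1 : MeasurableSet {z : ℝ × ℝ | z.2 ≤ z.1} := measurableSet_le measurable_snd measurable_fst
  have hD2 : MeasurableSet {z : ℝ × ℝ | z.1 ≤ z.2} := measurableSet_le measurable_fst measurable_snd
  have hdiag : ∀ᵐ z ∂m, z.1 ≠ z.2 := by
    have hms : MeasurableSet {z : ℝ × ℝ | z.1 = z.2} := measurableSet_eq_fun measurable_fst measurable_snd
    have : m {z : ℝ × ℝ | z.1 = z.2} = 0 := by
      rw [hm, Measure.prod_apply_symm hms, lintegral_eq_zero_iff' ?_]
      · refine Eventually.of_forall fun t => ?_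
        have : (fun s => (s, t)) ⁻¹' {z : ℝ × ℝ | z.1 = z.2} = {t} := by
          ext s; simp
        beta_reduce
        rw [this]; simp
      · exact (measurable_measure_prodMk_right hms).aemeasurable
    rw [ae_iff]
    convert this using 2
    ext z; simp
  have hsplit : (fun z : ℝ × ℝ => α z.1 * h z.2) =ᵐ[m] fun z =>
      {z : ℝ × ℝ | z.2 ≤ z.1}.indicator (fun z : ℝ × ℝ => α z.1 * h z.2) z +
      {z : ℝ × ℝ | z.1 ≤ z.2}.indicator (fun z : ℝ × ℝ => α z.1 * h z.2) z := by
    filter_upwards [hdiag] with z hz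
    rcases lt_or_gt_of_ne hz with h1 | h1
    · simp [indicator, h1.le, not_le.2 h1]
    · simp [indicator, h1.le, not_le.2 h1]
  rw [integral_congr_ae hsplit, integral_add (hint.indicator hD1) (hint.indicator hD2)]
  congr 1
  · rw [hm, integral_prod _ (hint.indicator hD1)]
    refine setIntegral_congr_fun measurableSet_Ioc fun s hs => ?_
    rw [← integral_const_mul]
    have : Ioc c s = Ioc c x ∩ Iic s := by
      ext t; simp only [mem_Ioc, mem_inter_iff, mem_Iic]
      exact ⟨fun h => ⟨⟨h.1, h.2.trans hs.2⟩, h.2⟩, fun h => ⟨h.1.1, h.2⟩⟩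
    rw [this, ← setIntegral_indicator measurableSet_Iic]
    refine integral_congr_ae (Eventually.of_forall fun t => ?_)
    simp only [indicator, mem_ofPred_eq, mem_Iic]
  · rw [hm, integral_prod_symm _ (hint.indicator hD2)]
    refine setIntegral_congr_fun measurableSet_Ioc fun t ht => ?_
    rw [← integral_mul_const]
    have : Ioc c t = Ioc c x ∩ Iic t := by
      ext s; simp only [mem_Ioc, mem_inter_iff, mem_Iic]
      exact ⟨fun h => ⟨⟨h.1, h.2.trans ht.2⟩, h.2⟩, fun h => ⟨h.1.1, h.2⟩⟩
    rw [this, ← setIntegral_indicator measurableSet_Iic]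
    refine integral_congr_ae (Eventually.of_forall fun s => ?_)
    simp only [indicator, mem_ofPred_eq, mem_Iic]

/-- Integration by parts. -/
theorem ibp {μ : Measure ℝ} [IsLocallyFiniteMeasure μ] {α h A B : ℝ → ℂ}
    (hα : LocallyIntegrable α volume) (hh : LocallyIntegrable h μ)
    (hA : ∀ c x, A x - A c = ∫ t in c..x, α t) (hB : ∀ c x, B x - B c = ∫ t in c..x, h t ∂μ)
    (hαB : LocallyIntegrable (fun t => α t * B t) volume)
    (hAh : LocallyIntegrable (fun t => A t * h t) μ) (c x : ℝ) :
    A x * B x - A c * B c = (∫ t in c..x, α t * B t) + ∫ t in c..x, A t * h t ∂μ := by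
  wlog hcx : c ≤ x generalizing c x
  · have := this x c (le_of_not_ge hcx)
    rw [intervalIntegral.integral_symm x c, intervalIntegral.integral_symm x c, ← neg_add, ← this]
    ring
  have key := ibp_aux hα hh c x
  have h1 : ∫ t in c..x, α t * B t = (∫ s in Ioc c x, α s * (∫ t in Ioc c s, h t ∂μ))
      + (A x - A c) * B c := by
    have e1 : ∀ s ∈ Ioc c x, α s * (∫ t in Ioc c s, h t ∂μ) = α s * B s - α s * B c := by
      intro s hs
      rw [← intervalIntegral.integral_of_le hs.1.le, ← hB]; ring
    rw [setIntegral_congr_fun measurableSet_Ioc e1, integral_sub (li_Ioc hαB c x)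
      ((li_Ioc hα c x).mul_const _), integral_mul_const, hA, intervalIntegral.integral_of_le hcx,
      intervalIntegral.integral_of_le hcx]
    ring
  have h2 : ∫ t in c..x, A t * h t ∂μ = (∫ t in Ioc c x, (∫ s in Ioc c t, α s) * h t ∂μ)
      + A c * (B x - B c) := by
    have e1 : ∀ t ∈ Ioc c x, (∫ s in Ioc c t, α s) * h t = A t * h t - A c * h t := by
      intro s hs
      rw [← intervalIntegral.integral_of_le hs.1.le, ← hA]; ring
    rw [setIntegral_congr_fun measurableSet_Ioc e1, integral_sub (li_Ioc hAh c x)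
      ((li_Ioc hh c x).const_mul _), integral_const_mul, hB, intervalIntegral.integral_of_le hcx,
      intervalIntegral.integral_of_le hcx]
    ring
  rw [← intervalIntegral.integral_of_le hcx, ← intervalIntegral.integral_of_le hcx, ← hA, ← hB] at key
  rw [h1, h2]
  linear_combination key

structure PR (w : ℝ → ℝ) (μ : Measure ℝ) (u u1 h : ℝ → ℂ) : Prop where
  li : LocallyIntegrable h μ
  e0 : ∀ c x, u x - u c = ∫ t in c..x, u1 t * (w t : ℂ)
  e1 : ∀ c x, u1 x - u1 c = ∫ t in c..x, h t ∂μ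

theorem li_ofReal {μ : Measure ℝ} {w : ℝ → ℝ} (hw : LocallyIntegrable w μ) :
    LocallyIntegrable (fun t => (w t : ℂ)) μ := by
  apply li_of_Icc
  intro a b
  exact (li_Icc hw a b).ofReal

theorem li_conj {μ : Measure ℝ} {h : ℝ → ℂ} (hh : LocallyIntegrable h μ) :
    LocallyIntegrable (fun t => (starRingEnd ℂ) (h t)) μ := by
  apply li_of_Icc
  intro a b
  exact Complex.conjLIE.toContinuousLinearEquiv.toContinuousLinearMap.integrable_comp (li_Icc hh a b)

theorem ii_conj {μ : Measure ℝ} (h : ℝ → ℂ) (a b : ℝ) :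
    ∫ t in a..b, (starRingEnd ℂ) (h t) ∂μ = (starRingEnd ℂ) (∫ t in a..b, h t ∂μ) := by
  simp only [intervalIntegral, integral_conj, map_sub]

set_option linter.unusedSectionVars false

namespace PR
variable {w : ℝ → ℝ} {μ : Measure ℝ} [IsLocallyFiniteMeasure μ] {u u1 h v v1 k : ℝ → ℂ}

theorem u1_eq (P : PR w μ u u1 h) : u1 = fun x => u1 0 + ∫ t in (0:ℝ)..x, h t ∂μ := by
  ext x; rw [← P.e1]; ring

theorem u1_meas (P : PR w μ u u1 h) : StronglyMeasurable u1 := by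
  rw [P.u1_eq]
  exact stronglyMeasurable_const.add (prim_meas P.li 0)

theorem u1_lb (P : PR w μ u u1 h) (a b : ℝ) : ∃ C : ℝ, ∀ x ∈ Icc a b, ‖u1 x‖ ≤ C := by
  obtain ⟨C, hC⟩ := prim_lb P.li 0 a b
  refine ⟨‖u1 0‖ + C, fun x hx => ?_⟩
  have : u1 x = u1 0 + ∫ t in (0:ℝ)..x, h t ∂μ := by rw [← P.e1]; ring
  rw [this]
  exact (norm_add_le _ _).trans (add_le_add le_rfl (hC x hx))

theorem li_u1w (P : PR w μ u u1 h) (hw : LocallyIntegrable w volume) :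
    LocallyIntegrable (fun t => u1 t * (w t : ℂ)) volume :=
  li_mul P.u1_meas.aestronglyMeasurable P.u1_lb (li_ofReal hw)

theorem cont (P : PR w μ u u1 h) (hw : LocallyIntegrable w volume) : Continuous u := by
  have : u = fun x => u 0 + ∫ t in (0:ℝ)..x, u1 t * (w t : ℂ) := by
    ext x; rw [← P.e0]; ring
  rw [this]
  exact continuous_const.add
    (intervalIntegral.continuous_primitive (fun a b => li_int (P.li_u1w hw) a b) 0)

theorem add (P : PR w μ u u1 h) (Q : PR w μ v v1 k) (hw : LocallyIntegrable w volume) :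
    PR w μ (fun t => u t + v t) (fun t => u1 t + v1 t) (fun t => h t + k t) where
  li := P.li.add Q.li
  e0 c x := by
    simp only [add_mul]
    rw [intervalIntegral.integral_add (li_int (P.li_u1w hw) _ _) (li_int (Q.li_u1w hw) _ _),
      ← P.e0, ← Q.e0]; ring
  e1 c x := by
    rw [intervalIntegral.integral_add (li_int P.li _ _) (li_int Q.li _ _), ← P.e1, ← Q.e1]; ring

theorem smul (P : PR w μ u u1 h) (a : ℂ) :
    PR w μ (fun t => a * u t) (fun t => a * u1 t) (fun t => a * h t) where
  li := P.li.smul a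
  e0 c x := by
    simp only [mul_assoc]
    rw [intervalIntegral.integral_const_mul, ← P.e0]; ring
  e1 c x := by
    rw [intervalIntegral.integral_const_mul, ← P.e1]; ring

theorem conj (P : PR w μ u u1 h) :
    PR w μ (fun t => (starRingEnd ℂ) (u t)) (fun t => (starRingEnd ℂ) (u1 t))
      (fun t => (starRingEnd ℂ) (h t)) where
  li := li_conj P.li
  e0 c x := by
    rw [← map_sub, P.e0, ← ii_conj]
    simp
  e1 c x := by
    rw [ii_conj, ← P.e1, map_sub]

theorem congr_h (P : PR w μ u u1 h) (e : h =ᵐ[μ] k) : PR w μ u u1 k where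
  li := P.li.congr e
  e0 := P.e0
  e1 c x := by
    rw [P.e1]
    exact intervalIntegral.integral_congr_ae (e.mono fun x hx _ => hx)

theorem green (P : PR w μ u u1 h) (Q : PR w μ v v1 k) (hw : LocallyIntegrable w volume) (c x : ℝ) :
    Wr u u1 v v1 x - Wr u u1 v v1 c = ∫ t in c..x, (u t * k t - h t * v t) ∂μ := by
  have hu := P.cont hw
  have hv := Q.cont hw
  have l1 : LocallyIntegrable (fun t => u1 t * (w t : ℂ) * v1 t) volume := by
    simpa only [mul_comm] using li_mul Q.u1_meas.aestronglyMeasurable Q.u1_lb (P.li_u1w hw)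
  have l2 : LocallyIntegrable (fun t => v1 t * (w t : ℂ) * u1 t) volume := by
    simpa only [mul_comm] using li_mul P.u1_meas.aestronglyMeasurable P.u1_lb (Q.li_u1w hw)
  have i1 := ibp (P.li_u1w hw) Q.li P.e0 Q.e1 l1 (li_cmul hu Q.li) c x
  have i2 := ibp (Q.li_u1w hw) P.li Q.e0 P.e1 l2 (li_cmul hv P.li) c x
  have e : (fun t => h t * v t) = fun t => v t * h t := by ext; ring
  rw [intervalIntegral.integral_sub (li_int (li_cmul hu Q.li) _ _) (li_int (li_mulc hv P.li) _ _),
    e]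
  have e2 : (fun t => u1 t * (w t : ℂ) * v1 t) = (fun t => v1 t * (w t : ℂ) * u1 t) := by
    ext; ring
  rw [e2] at i1
  simp only [Wr]
  linear_combination i1 - i2

/-- right continuity: vanishing a.e. implies vanishing -/
theorem u1_zero (P : PR w μ u u1 h) {s t : ℝ} (hz : ∀ᵐ x ∂volume.restrict (Ioo s t), u1 x = 0) :
    ∀ x ∈ Ico s t, u1 x = 0 := by
  intro x hx
  have hlim : Tendsto (fun y => ∫ r in Ioc x y, h r ∂μ) (nhdsWithin x (Ioi x)) (nhds 0) := by
    have : Tendsto (fun y => ∫ r, (Ioc x y).indicator h r ∂(μ.restrict (Ioc x t)))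
        (nhdsWithin x (Ioi x)) (nhds (∫ r, (0 : ℂ) ∂(μ.restrict (Ioc x t)))) := by
      refine tendsto_integral_filter_of_dominated_convergence (fun r => ‖h r‖) ?_ ?_ ?_ ?_
      · exact Eventually.of_forall fun y =>
          (P.li.aestronglyMeasurable.restrict).indicator measurableSet_Ioc
      · refine Eventually.of_forall fun y => Eventually.of_forall fun r => norm_indicator_le_norm_self _ _
      · exact (li_Ioc P.li x t).norm
      · refine Eventually.of_forall fun r => ?_
        refine tendsto_const_nhds.congr' ?_
        by_cases hr : x < r
        · filter_upwards [nhdsWithin_le_nhds (Iio_mem_nhds hr)] with y hy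
          rw [indicator_of_notMem]
          simp only [mem_Ioc, not_and, not_le]
          exact fun _ => hy
        · refine Eventually.of_forall fun y => ?_
          beta_reduce
          rw [indicator_of_notMem]
          simp [hr]
    rw [integral_zero] at this
    refine this.congr' ?_
    filter_upwards [Ioo_mem_nhdsGT hx.2] with y hy
    rw [setIntegral_indicator measurableSet_Ioc]
    congr 2
    ext r; simp only [mem_inter_iff, mem_Ioc]
    exact ⟨fun h => h.2, fun h => ⟨⟨h.1, h.2.trans hy.2.le⟩, h⟩⟩
  have hlim2 : Tendsto u1 (nhdsWithin x (Ioi x)) (nhds (u1 x)) := by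
    have := hlim.const_add (u1 x)
    rw [add_zero] at this
    refine this.congr' ?_
    filter_upwards [self_mem_nhdsWithin] with y hy
    rw [← intervalIntegral.integral_of_le (le_of_lt hy), ← P.e1]; ring
  have hfreq : ∃ᶠ y in nhdsWithin x (Ioi x), u1 y = 0 := by
    rw [Filter.frequently_iff]
    intro U hU
    obtain ⟨b, hb, hbU⟩ := (mem_nhdsGT_iff_exists_Ioo_subset' (u' := t) hx.2).1 hU
    have hb' : x < b := hb
    have hlt : x < min b t := lt_min hb hx.2
    by_contra hcon
    push Not at hcon
    rw [ae_restrict_iff' measurableSet_Ioo] at hz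
    have h0 : volume (Ioo x (min b t)) = 0 := by
      refine measure_mono_null ?_ (ae_iff.1 hz)
      intro y hy
      simp only [mem_ofPred_eq, Classical.not_imp]
      exact ⟨⟨hx.1.trans_lt hy.1, hy.2.trans_le (min_le_right _ _)⟩,
        hcon y (hbU ⟨hy.1, hy.2.trans_le (min_le_left _ _)⟩)⟩
    simp only [Real.volume_Ioo, ENNReal.ofReal_eq_zero] at h0
    linarith
  by_contra hne
  have := hlim2.eventually (isOpen_ne.mem_nhds hne)
  exact hfreq (this.mono fun y hy h => hy h)

end PR

theorem ae_zero_of_Ioc {μ : Measure ℝ} {f : ℝ → ℂ}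
    (hf : LocallyIntegrable f μ) {s t : ℝ} (hst : s ≤ t)
    (h0 : ∀ c x, s ≤ c → c ≤ x → x ≤ t → ∫ y in Ioc c x, f y ∂μ = 0) :
    ∀ᵐ y ∂μ.restrict (Ioc s t), f y = 0 := by
  have hi : Integrable f (μ.restrict (Ioc s t)) := li_Ioc hf s t
  refine Integrable.ae_eq_zero_of_forall_setIntegral_eq_zero hi ?_
  intro S hS hfin
  clear hfin
  have hall : ∫ y, f y ∂(μ.restrict (Ioc s t)) = 0 := h0 s t le_rfl hst le_rfl
  induction S, hS using MeasurableSpace.induction_on_inter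
      (BorelSpace.measurable_eq.trans (borel_eq_generateFrom_Ioc ℝ)) (isPiSystem_Ioc id id) with
  | empty => simp
  | basic S hS =>
    obtain ⟨a, b, hab, rfl⟩ := hS
    rw [Measure.restrict_restrict measurableSet_Ioc]
    simp only [id, Ioc_inter_Ioc]
    by_cases hle : a ⊔ s ≤ b ⊓ t
    · exact h0 _ _ le_sup_right hle inf_le_right
    · rw [Ioc_eq_empty (fun h => hle h.le)]; simp
  | compl S hS ih =>
    have := integral_add_compl hS hi
    rw [hall, ih, zero_add] at this
    exact this
  | iUnion S hd hm ih =>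
    rw [integral_iUnion hm hd hi.integrableOn]
    simp [ih]

theorem omega_pow {ω : ℝ → ℝ} (hω : LocallyIntegrable ω volume) (c : ℝ) (n : ℕ) (x : ℝ) :
    ∫ t in c..x, (∫ s in c..t, ω s) ^ n * ω t = (∫ s in c..x, ω s) ^ (n + 1) / (n + 1) := by
  set Ω : ℝ → ℝ := fun t => ∫ s in c..t, ω s with hΩ
  have hΩc : Continuous Ω := intervalIntegral.continuous_primitive (fun a b => li_int hω a b) c
  have hΩC : Continuous (fun t => (Ω t : ℂ)) := Complex.continuous_ofReal.comp hΩc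
  have hωC := li_ofReal hω
  have hsub : ∀ a b, (Ω b : ℂ) - Ω a = ∫ t in a..b, (ω t : ℂ) := by
    intro a b
    rw [intervalIntegral.integral_ofReal, ← Complex.ofReal_sub]
    congr 1
    exact intervalIntegral.integral_interval_sub_left (li_int hω _ _) (li_int hω _ _)
  have main : ∀ n : ℕ, ∀ a b : ℝ, (Ω b : ℂ) ^ (n + 1) - (Ω a : ℂ) ^ (n + 1)
      = ∫ t in a..b, ((n : ℂ) + 1) * (Ω t : ℂ) ^ n * (ω t : ℂ) := by
    intro n
    induction n with
    | zero => intro a b; simpa using hsub a b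
    | succ n ih =>
      intro a b
      have l1 : LocallyIntegrable (fun t => ((n : ℂ) + 1) * (Ω t : ℂ) ^ n * (ω t : ℂ)) volume :=
        li_cmul (continuous_const.mul (hΩC.pow n)) hωC
      have l2 : LocallyIntegrable (fun t => (ω t : ℂ) * (Ω t : ℂ) ^ (n + 1)) volume :=
        li_mulc (hΩC.pow _) hωC
      have l3 : LocallyIntegrable (fun t => (Ω t : ℂ) * (((n : ℂ) + 1) * (Ω t : ℂ) ^ n * (ω t : ℂ)))
          volume := li_cmul hΩC l1
      have := ibp hωC l1 hsub ih l2 l3 a b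
      rw [← intervalIntegral.integral_add (li_int l2 _ _) (li_int l3 _ _)] at this
      rw [pow_succ' _ (n + 1), pow_succ' _ (n + 1), this]
      congr 1
      ext t
      push_cast
      ring
  have h := main n c x
  have h0 : Ω c = 0 := by simp [hΩ]
  rw [h0] at h
  have e : (fun t => ((n : ℂ) + 1) * (Ω t : ℂ) ^ n * (ω t : ℂ)) =
      fun t => (((n + 1) * (Ω t ^ n * ω t) : ℝ) : ℂ) := by
    ext t; push_cast; ring
  rw [e, intervalIntegral.integral_ofReal, intervalIntegral.integral_const_mul] at h
  have h' : Ω x ^ (n + 1) = (n + 1) * ∫ t in c..x, Ω t ^ n * ω t := by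
    have : ((Ω x ^ (n + 1) : ℝ) : ℂ) = (((n + 1) * ∫ t in c..x, Ω t ^ n * ω t : ℝ) : ℂ) := by
      rw [← h]; simp
    exact_mod_cast this
  have hn : (n : ℝ) + 1 ≠ 0 := by positivity
  change _ = Ω x ^ (n + 1) / (n + 1)
  rw [h']; field_simp; rfl

theorem omega_mono {ω : ℝ → ℝ} (hω : LocallyIntegrable ω volume) (h0 : ∀ t, 0 ≤ ω t) (c : ℝ) :
    Monotone (fun t => ∫ s in c..t, ω s) := by
  intro a b hab
  have : (∫ s in c..b, ω s) - (∫ s in c..a, ω s) = ∫ s in a..b, ω s :=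
    intervalIntegral.integral_interval_sub_left (li_int hω _ _) (li_int hω _ _)
  have h2 : 0 ≤ ∫ s in a..b, ω s := intervalIntegral.integral_nonneg hab fun t _ => h0 t
  show (∫ s in c..a, ω s) ≤ ∫ s in c..b, ω s
  linarith

theorem omega_abs_mono {ω : ℝ → ℝ} (hω : LocallyIntegrable ω volume) (h0 : ∀ t, 0 ≤ ω t) (c : ℝ)
    {s t : ℝ} (hs : s ∈ Set.uIoc c t) : |∫ r in c..s, ω r| ≤ |∫ r in c..t, ω r| := by
  have hm := omega_mono hω h0 c
  have hc : ∫ r in c..c, ω r = 0 := by simp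
  rcases le_total c t with hct | hct
  · rw [uIoc_of_le hct] at hs
    have h1 := hm hs.1.le
    have h2 := hm hs.2
    simp only [hc] at h1 h2
    rw [abs_of_nonneg h1, abs_of_nonneg (h1.trans h2)]; exact h2
  · rw [uIoc_of_ge hct] at hs
    have h1 := hm hs.1.le
    have h2 := hm hs.2
    simp only [hc] at h1 h2
    rw [abs_of_nonpos h2, abs_of_nonpos (h1.trans h2)]; linarith

theorem omega_abs_pow {ω : ℝ → ℝ} (hω : LocallyIntegrable ω volume) (h0 : ∀ t, 0 ≤ ω t) (c : ℝ)
    (n : ℕ) (x : ℝ) :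
    |∫ t in c..x, |∫ s in c..t, ω s| ^ n * ω t| = |∫ s in c..x, ω s| ^ (n + 1) / (n + 1) := by
  have hm := omega_mono hω h0 c
  have hc : ∫ r in c..c, ω r = 0 := by simp
  have hsign : ∃ ε : ℝ, |ε| = 1 ∧ ∀ t ∈ Set.uIoc c x, |∫ s in c..t, ω s| = ε * ∫ s in c..t, ω s := by
    rcases le_total c x with hct | hct
    · refine ⟨1, by simp, fun t ht => ?_⟩
      rw [uIoc_of_le hct] at ht
      have h1 := hm ht.1.le
      simp only [hc] at h1
      rw [abs_of_nonneg h1]; ring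
    · refine ⟨-1, by simp, fun t ht => ?_⟩
      rw [uIoc_of_ge hct] at ht
      have h1 := hm ht.2
      simp only [hc] at h1
      rw [abs_of_nonpos h1]; ring
  obtain ⟨ε, hε, hs⟩ := hsign
  have : ∫ t in c..x, |∫ s in c..t, ω s| ^ n * ω t
      = ∫ t in c..x, ε ^ n * ((∫ s in c..t, ω s) ^ n * ω t) := by
    refine intervalIntegral.integral_congr_ae (Eventually.of_forall fun t ht => ?_)
    rw [hs t ht]; ring
  rw [this, intervalIntegral.integral_const_mul, omega_pow hω, abs_mul, abs_pow, hε, one_pow, one_mul,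
    abs_div, abs_pow]
  congr 1
  exact abs_of_nonneg (by positivity)

theorem pr_of_base {w : ℝ → ℝ} {μ : Measure ℝ} [IsLocallyFiniteMeasure μ] {u u1 h : ℝ → ℂ}
    (hw : LocallyIntegrable w volume) (hh : LocallyIntegrable h μ) (c : ℝ)
    (h0 : ∀ x, u x = u c + ∫ t in c..x, u1 t * (w t : ℂ))
    (h1 : ∀ x, u1 x = u1 c + ∫ t in c..x, h t ∂μ) : PR w μ u u1 h := by
  have e1 : ∀ a x, u1 x - u1 a = ∫ t in a..x, h t ∂μ := by
    intro a x
    rw [h1 x, h1 a, ← intervalIntegral.integral_interval_sub_left (li_int hh c x) (li_int hh c a)]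
    ring
  have hm : StronglyMeasurable u1 := by
    have : u1 = fun x => u1 c + ∫ t in c..x, h t ∂μ := funext h1
    rw [this]; exact stronglyMeasurable_const.add (prim_meas hh c)
  have hl : ∀ a b : ℝ, ∃ C : ℝ, ∀ x ∈ Icc a b, ‖u1 x‖ ≤ C := by
    intro a b
    obtain ⟨C, hC⟩ := prim_lb hh c a b
    refine ⟨‖u1 c‖ + C, fun x hx => ?_⟩
    rw [h1 x]
    exact (norm_add_le _ _).trans (add_le_add le_rfl (hC x hx))
  have hli := li_mul hm.aestronglyMeasurable hl (li_ofReal hw)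
  refine ⟨hh, fun a x => ?_, e1⟩
  rw [h0 x, h0 a, ← intervalIntegral.integral_interval_sub_left (li_int hli c x) (li_int hli c a)]
  ring

noncomputable def pJ (μ : Measure ℝ) (q : ℝ → ℂ) (c : ℝ) (f : ℝ → ℂ) (t : ℝ) : ℂ :=
  ∫ s in c..t, q s * f s ∂μ

noncomputable def pK (w : ℝ → ℝ) (μ : Measure ℝ) (q : ℝ → ℂ) (c : ℝ) (f : ℝ → ℂ) (x : ℝ) : ℂ :=
  ∫ t in c..x, pJ μ q c f t * (w t : ℂ)

theorem li_norm {μ : Measure ℝ} {F : Type*} [NormedAddCommGroup F] {f : ℝ → F}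
    (hf : LocallyIntegrable f μ) : LocallyIntegrable (fun t => ‖f t‖) μ :=
  li_of_Icc fun a b => (li_Icc hf a b).norm

theorem pJ_li {w : ℝ → ℝ} {μ : Measure ℝ} [IsLocallyFiniteMeasure μ] {q f : ℝ → ℂ}
    (hw : LocallyIntegrable w volume) (hq : LocallyIntegrable q μ) (hf : Continuous f) (c : ℝ) :
    LocallyIntegrable (fun t => pJ μ q c f t * (w t : ℂ)) volume :=
  li_mul (prim_meas (li_mulc hf hq) c).aestronglyMeasurable (prim_lb (li_mulc hf hq) c) (li_ofReal hw)

theorem pK_cont {w : ℝ → ℝ} {μ : Measure ℝ} [IsLocallyFiniteMeasure μ] {q f : ℝ → ℂ}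
    (hw : LocallyIntegrable w volume) (hq : LocallyIntegrable q μ) (hf : Continuous f) (c : ℝ) :
    Continuous (pK w μ q c f) :=
  intervalIntegral.continuous_primitive (fun a b => li_int (pJ_li hw hq hf c) a b) c

theorem pJ_bound {μ : Measure ℝ} {q f : ℝ → ℂ}
    (hq : LocallyIntegrable q μ) {a b c t B : ℝ} (hB : 0 ≤ B)
    (ht : Set.uIoc c t ⊆ Icc a b) (hf : ∀ s ∈ Set.uIoc c t, ‖f s‖ ≤ B) :
    ‖pJ μ q c f t‖ ≤ (∫ s in Icc a b, ‖q s‖ ∂μ) * B := by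
  have hi : IntegrableOn (fun s => ‖q s‖ * B) (Icc a b) μ := (li_Icc hq a b).norm.mul_const B
  calc ‖pJ μ q c f t‖ ≤ ∫ s in Set.uIoc c t, ‖q s * f s‖ ∂μ :=
        intervalIntegral.norm_integral_le_integral_norm_uIoc
    _ ≤ ∫ s in Set.uIoc c t, ‖q s‖ * B ∂μ := by
        refine integral_mono_of_nonneg (Eventually.of_forall fun _ => norm_nonneg _)
          (hi.mono_set ht) ?_
        refine (ae_restrict_iff' measurableSet_uIoc).2 (Eventually.of_forall fun s hs => ?_)
        simp only [norm_mul]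
        exact mul_le_mul_of_nonneg_left (hf s hs) (norm_nonneg _)
    _ ≤ ∫ s in Icc a b, ‖q s‖ * B ∂μ := by
        refine setIntegral_mono_set hi (Eventually.of_forall fun _ => by positivity) ?_
        exact LE.le.eventuallyLE ht
    _ = _ := integral_mul_const _ _

theorem pK_bound {w : ℝ → ℝ} {μ : Measure ℝ} [IsLocallyFiniteMeasure μ] {q f : ℝ → ℂ}
    (hw : LocallyIntegrable w volume) (hq : LocallyIntegrable q μ) {a b c A : ℝ}
    (hc : c ∈ Icc a b) (hA : 0 ≤ A) (n : ℕ)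
    (hf : ∀ x ∈ Icc a b, ‖f x‖ ≤ A * abs (∫ s in c..x, |w s|) ^ n) (x : ℝ) (hx : x ∈ Icc a b) :
    ‖pK w μ q c f x‖ ≤ ((∫ s in Icc a b, ‖q s‖ ∂μ) * A / (n + 1)) * abs (∫ s in c..x, |w s|) ^ (n + 1) := by
  set Q := ∫ s in Icc a b, ‖q s‖ ∂μ with hQ
  have hwa : LocallyIntegrable (fun t => |w t|) volume := (li_norm hw)
  have hcont : Continuous (fun t => ∫ s in c..t, |w s|) :=
    intervalIntegral.continuous_primitive (fun a b => li_int hwa a b) c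
  have hsub : ∀ t ∈ Icc a b, Set.uIoc c t ⊆ Icc a b := fun t ht =>
    uIoc_subset_uIcc.trans (uIcc_subset_Icc hc ht)
  have hg : LocallyIntegrable (fun t => (Q * A) * (abs (∫ s in c..t, |w s|) ^ n * |w t|)) volume := by
    have := hwa.continuous_mul ((hcont.abs).pow n)
    exact this.smul (Q * A)
  have h1 : ‖pK w μ q c f x‖ ≤ |∫ t in c..x, (Q * A) * (abs (∫ s in c..t, |w s|) ^ n * |w t|)| := by
    refine intervalIntegral.norm_integral_le_abs_of_norm_le ?_ (li_int hg c x)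
    refine (ae_restrict_iff' measurableSet_uIoc).2 (Eventually.of_forall fun t ht => ?_)
    have htI : t ∈ Icc a b := hsub x hx ht
    have := pJ_bound (f := f) hq (B := A * abs (∫ s in c..t, |w s|) ^ n) (by positivity) (hsub t htI) (fun s hs => by
      refine (hf s (hsub t htI hs)).trans ?_
      refine mul_le_mul_of_nonneg_left ?_ hA
      exact pow_le_pow_left₀ (abs_nonneg _) (omega_abs_mono hwa (fun _ => abs_nonneg _) c hs) n)
    rw [norm_mul, Complex.norm_real, Real.norm_eq_abs]
    calc _ ≤ (Q * (A * abs (∫ s in c..t, |w s|) ^ n)) * |w t| :=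
          mul_le_mul_of_nonneg_right this (abs_nonneg _)
      _ = _ := by ring
  rw [intervalIntegral.integral_const_mul, abs_mul, omega_abs_pow hwa (fun _ => abs_nonneg _)] at h1
  have hQ0 : 0 ≤ Q := integral_nonneg fun _ => norm_nonneg _
  rw [abs_of_nonneg (mul_nonneg hQ0 hA)] at h1
  refine h1.trans (le_of_eq ?_)
  ring

theorem exists_sol {w : ℝ → ℝ} {μ : Measure ℝ} [IsLocallyFiniteMeasure μ] {q k : ℝ → ℂ}
    (hw : LocallyIntegrable w volume) (hq : LocallyIntegrable q μ) (hk : LocallyIntegrable k μ)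
    (c : ℝ) (a0 a1 : ℂ) :
    ∃ u u1, PR w μ u u1 (fun t => q t * u t - k t) ∧ u c = a0 ∧ u1 c = a1 := by
  have hgl : LocallyIntegrable (fun t => (a1 - ∫ s in c..t, k s ∂μ) * (w t : ℂ)) volume := by
    refine li_mul (stronglyMeasurable_const.sub (prim_meas hk c)).aestronglyMeasurable ?_ (li_ofReal hw)
    intro a b
    obtain ⟨C, hC⟩ := prim_lb hk c a b
    exact ⟨‖a1‖ + C, fun x hx => (norm_sub_le _ _).trans (add_le_add le_rfl (hC x hx))⟩
  set g : ℝ → ℂ := fun x => a0 + ∫ t in c..x, (a1 - ∫ s in c..t, k s ∂μ) * (w t : ℂ) with hgdef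
  have hgc : Continuous g :=
    continuous_const.add (intervalIntegral.continuous_primitive (fun a b => li_int hgl a b) c)
  set us : ℕ → ℝ → ℂ := fun n => (pK w μ q c)^[n] g with hus
  have us0 : us 0 = g := rfl
  have usS : ∀ n, us (n + 1) = pK w μ q c (us n) := fun n => Function.iterate_succ_apply' _ _ _
  have husc : ∀ n, Continuous (us n) := by
    intro n
    induction n with
    | zero => exact hgc
    | succ n ih => rw [usS]; exact pK_cont hw hq ih c
  -- bounds
  have hbd : ∀ a b : ℝ, c ∈ Icc a b → ∃ v : ℕ → ℝ, Summable v ∧ (∀ n, 0 ≤ v n) ∧ 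
      ∀ n, ∀ x ∈ Icc a b, ‖us n x‖ ≤ v n := by
    intro a b hc
    obtain ⟨M, hM⟩ := cont_lb hgc a b
    have hM0 : 0 ≤ M := (norm_nonneg _).trans (hM c hc)
    set Q := ∫ s in Icc a b, ‖q s‖ ∂μ with hQ
    have hQ0 : 0 ≤ Q := integral_nonneg fun _ => norm_nonneg _
    have hwa : LocallyIntegrable (fun t => |w t|) volume := (li_norm hw)
    have hcont : Continuous (fun t => ∫ s in c..t, |w s|) :=
      intervalIntegral.continuous_primitive (fun a b => li_int hwa a b) c
    obtain ⟨O, hO⟩ := isCompact_Icc (a := a) (b := b) |>.exists_bound_of_continuousOn hcont.continuousOn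
    have hO0 : 0 ≤ O := (norm_nonneg _).trans (hO c hc)
    have key : ∀ n : ℕ, ∀ x ∈ Icc a b, ‖us n x‖ ≤ (M * Q ^ n / n.factorial) * abs (∫ s in c..x, |w s|) ^ n := by
      intro n
      induction n with
      | zero => intro x hx; rw [us0]; simpa using hM x hx
      | succ n ih =>
        intro x hx
        rw [usS]
        refine (pK_bound hw hq hc (by positivity) n ih x hx).trans (le_of_eq ?_)
        rw [Nat.factorial_succ]; push_cast; rw [← hQ]
        field_simp
        ring
    refine ⟨fun n => M * ((Q * O) ^ n / n.factorial),
      (Real.summable_pow_div_factorial _).mul_left M, fun n => by positivity, ?_⟩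
    intro n x hx
    refine (key n x hx).trans ?_
    have : abs (∫ s in c..x, |w s|) ^ n ≤ O ^ n := pow_le_pow_left₀ (abs_nonneg _) (hO x hx) n
    calc _ ≤ (M * Q ^ n / n.factorial) * O ^ n := mul_le_mul_of_nonneg_left this (by positivity)
      _ = _ := by simp only [mul_pow]; ring
  have hsum : ∀ x, Summable fun n => us n x := by
    intro x
    obtain ⟨v, hv, -, hb⟩ := hbd (min c x) (max c x) ⟨min_le_left _ _, le_max_left _ _⟩
    exact Summable.of_norm_bounded hv fun n => hb n x ⟨min_le_right _ _, le_max_right _ _⟩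
  set U : ℝ → ℂ := fun x => ∑' n, us n x with hU
  have hUc : Continuous U := by
    rw [continuous_iff_continuousAt]
    intro x
    obtain ⟨v, hv, -, hb⟩ := hbd (min c x - 1) (max c x + 1)
      ⟨by linarith [min_le_left c x], by linarith [le_max_left c x]⟩
    have : ContinuousOn U (Icc (min c x - 1) (max c x + 1)) :=
      continuousOn_tsum (fun n => (husc n).continuousOn) hv hb
    exact this.continuousAt (Icc_mem_nhds (by linarith [min_le_right c x]) (by linarith [le_max_right c x]))
  have hJ : ∀ t, HasSum (fun n => pJ μ q c (us n) t) (pJ μ q c U t) := by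
    intro t
    obtain ⟨v, hv, hv0, hb⟩ := hbd (min c t) (max c t) ⟨min_le_left _ _, le_max_left _ _⟩
    have hin : ∀ s ∈ Set.uIoc c t, s ∈ Icc (min c t) (max c t) := fun s hs => Ioc_subset_Icc_self hs
    refine intervalIntegral.hasSum_integral_of_dominated_convergence (fun n s => ‖q s‖ * v n) ?_ ?_ ?_ ?_ ?_
    · intro n; exact (li_mulc (husc n) hq).aestronglyMeasurable.restrict
    · intro n
      refine Eventually.of_forall fun s hs => ?_
      rw [norm_mul]
      exact mul_le_mul_of_nonneg_left (hb n s (hin s hs)) (norm_nonneg _)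
    · exact Eventually.of_forall fun s _ => hv.mul_left _
    · simp only [tsum_mul_left]
      exact (li_int (li_norm hq) c t).mul_const _
    · exact Eventually.of_forall fun s _ => (hsum s).hasSum.mul_left _
  have hK : ∀ x, HasSum (fun n => pK w μ q c (us n) x) (pK w μ q c U x) := by
    intro x
    obtain ⟨v, hv, hv0, hb⟩ := hbd (min c x) (max c x) ⟨min_le_left _ _, le_max_left _ _⟩
    have hin : ∀ s ∈ Set.uIoc c x, s ∈ Icc (min c x) (max c x) := fun s hs => Ioc_subset_Icc_self hs
    set Q := ∫ s in Icc (min c x) (max c x), ‖q s‖ ∂μ with hQ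
    refine intervalIntegral.hasSum_integral_of_dominated_convergence (fun n s => (Q * v n) * |w s|) ?_ ?_ ?_ ?_ ?_
    · intro n; exact (pJ_li hw hq (husc n) c).aestronglyMeasurable.restrict
    · intro n
      refine Eventually.of_forall fun s hs => ?_
      rw [norm_mul, Complex.norm_real, Real.norm_eq_abs]
      refine mul_le_mul_of_nonneg_right ?_ (abs_nonneg _)
      have hss : Set.uIoc c s ⊆ Icc (min c x) (max c x) :=
        uIoc_subset_uIcc.trans (uIcc_subset_Icc ⟨min_le_left _ _, le_max_left _ _⟩ (hin s hs))
      exact pJ_bound hq (hv0 n) hss fun y hy => hb n y (hss hy)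
    · exact Eventually.of_forall fun s _ => (hv.mul_left Q).mul_right _
    · have : (fun s => ∑' n, (Q * v n) * |w s|) = fun s => (∑' n, Q * v n) * |w s| := by
        ext s; exact tsum_mul_right
      rw [this]
      exact (li_int (li_norm hw) c x).const_mul _
    · exact Eventually.of_forall fun s _ => (hJ s).mul_right _
  have hfix : ∀ x, U x = g x + pK w μ q c U x := by
    intro x
    have h1 : HasSum (fun n => us (n + 1) x) (pK w μ q c U x) := by
      simp only [usS]; exact hK x
    have h2 := (hasSum_nat_add_iff' 1).2 (hsum x).hasSum
    have := h1.unique h2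
    simp at this
    rw [this, us0]; simp [hU]
  have hqU := li_mulc hUc hq
  have hden : LocallyIntegrable (fun t => q t * U t - k t) μ := hqU.sub hk
  have hUc0 : U c = a0 := by rw [hfix]; simp [hgdef, pK]
  refine ⟨U, fun t => a1 + ∫ s in c..t, (q s * U s - k s) ∂μ, ?_, hUc0, by simp⟩
  refine pr_of_base hw hden c ?_ ?_
  · intro x
    rw [hUc0, hfix, hgdef, pK]
    simp only []
    rw [add_assoc, ← intervalIntegral.integral_add (li_int hgl _ _) (li_int (pJ_li hw hq hUc c) _ _)]
    congr 2
    ext t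
    rw [intervalIntegral.integral_sub (li_int hqU _ _) (li_int hk _ _), pJ]
    ring
  · intro x; simp
set_option linter.unusedSectionVars false

theorem lim_le_zero {Hu Hv : ℝ → ℝ} {Huv : ℝ → ℂ} {D : ℝ} (mu : Monotone Hu) (mv : Monotone Hv)
    (hD : ∀ x, Hu x * Hv x = ‖Huv x‖ ^ 2 - D)
    (cs : ∀ y x, y ≤ x → ‖Huv x - Huv y‖ ^ 2 ≤ (Hu x - Hu y) * (Hv x - Hv y))
    (hb : ∃ B, ∀ x, Hu x ≤ B) (hv : ∀ B, ∃ x, B < Hv x) : ∀ x, Hu x ≤ 0 := by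
  by_contra hcon
  push Not at hcon
  obtain ⟨x0, hx0⟩ := hcon
  obtain ⟨B, hB⟩ := hb
  have hbdd : BddAbove (range Hu) := ⟨B, by rintro _ ⟨x, rfl⟩; exact hB x⟩
  set L := sSup (range Hu) with hL
  have hle : ∀ x, Hu x ≤ L := fun x => le_csSup hbdd ⟨x, rfl⟩
  have hL0 : 0 < L := hx0.trans_le (hle x0)
  obtain ⟨_, ⟨y, rfl⟩, hy⟩ := exists_lt_of_lt_csSup (range_nonempty Hu) (show L - L / 4 < L by linarith)
  set C := ‖Huv y‖ with hC
  obtain ⟨x1, hx1⟩ := hv (max 0 ((2 * C ^ 2 - D - L / 2 * Hv y) * (4 / L)))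
  set x := max x1 y with hx
  have hxy : y ≤ x := le_max_right _ _
  have hvx : max 0 ((2 * C ^ 2 - D - L / 2 * Hv y) * (4 / L)) < Hv x := hx1.trans_le (mv (le_max_left _ _))
  have hv0 : 0 < Hv x := (le_max_left _ _).trans_lt hvx
  have hv1 : (2 * C ^ 2 - D - L / 2 * Hv y) * (4 / L) < Hv x := (le_max_right _ _).trans_lt hvx
  have h1 : ‖Huv x‖ ^ 2 ≤ 2 * C ^ 2 + 2 * ‖Huv x - Huv y‖ ^ 2 := by
    have : ‖Huv x‖ ≤ C + ‖Huv x - Huv y‖ := by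
      have := norm_add_le (Huv y) (Huv x - Huv y)
      simpa using this
    nlinarith [norm_nonneg (Huv x), sq_nonneg (C - ‖Huv x - Huv y‖)]
  have h2 := cs y x hxy
  have h3 : (Hu x - Hu y) * (Hv x - Hv y) ≤ L / 4 * (Hv x - Hv y) :=
    mul_le_mul_of_nonneg_right (by linarith [hle x]) (by linarith [mv hxy])
  have h4 : (L - L / 4) * Hv x ≤ Hu x * Hv x :=
    mul_le_mul_of_nonneg_right (by linarith [mu hxy]) hv0.le
  have h5 := hD x
  have h6 : (2 * C ^ 2 - D - L / 2 * Hv y) * (4 / L) * (L / 4) < Hv x * (L / 4) :=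
    mul_lt_mul_of_pos_right hv1 (by linarith)
  have h7 : (2 * C ^ 2 - D - L / 2 * Hv y) * (4 / L) * (L / 4) = 2 * C ^ 2 - D - L / 2 * Hv y := by
    field_simp
  nlinarith

section
variable {w r q : ℝ → ℝ} {μ : Measure ℝ} [IsLocallyFiniteMeasure μ]

theorem li_sq {u : ℝ → ℂ} (hu : Continuous u) (hr : LocallyIntegrable r μ) :
    LocallyIntegrable (fun t => ‖u t‖ ^ 2 * r t) μ :=
  hr.continuous_mul (hu.norm.pow 2)

theorem cs_int {u v : ℝ → ℂ} (hu : Continuous u) (hv : Continuous v)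
    (hr : LocallyIntegrable r μ) (hrpos : ∀ᵐ t ∂μ, 0 < r t) (y x : ℝ) :
    ‖∫ t in Ioc y x, (r t : ℂ) * u t * (starRingEnd ℂ) (v t) ∂μ‖ ^ 2 ≤
      (∫ t in Ioc y x, ‖u t‖ ^ 2 * r t ∂μ) * (∫ t in Ioc y x, ‖v t‖ ^ 2 * r t ∂μ) := by
  have l1 := li_Ioc (li_sq hu hr) y x
  have l2 := li_Ioc (li_sq hv hr) y x
  have l3 : IntegrableOn (fun t => ‖u t‖ * ‖v t‖ * r t) (Ioc y x) μ :=
    li_Ioc (hr.continuous_mul (hu.norm.mul hv.norm)) y x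
  set A := ∫ t in Ioc y x, ‖u t‖ ^ 2 * r t ∂μ
  set B := ∫ t in Ioc y x, ‖v t‖ ^ 2 * r t ∂μ
  set N := ∫ t in Ioc y x, ‖u t‖ * ‖v t‖ * r t ∂μ with hN
  have hle : ‖∫ t in Ioc y x, (r t : ℂ) * u t * (starRingEnd ℂ) (v t) ∂μ‖ ≤ N := by
    refine norm_integral_le_of_norm_le l3 ?_
    filter_upwards [ae_restrict_of_ae hrpos] with t ht
    simp only [norm_mul, RCLike.norm_conj, Complex.norm_real, Real.norm_eq_abs, abs_of_pos ht]
    exact le_of_eq (by ring)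
  have hq : ∀ s : ℝ, 0 ≤ A * (s * s) + (-2 * N) * s + B := by
    intro s
    have : A * (s * s) + (-2 * N) * s + B = ∫ t in Ioc y x, (s * ‖u t‖ - ‖v t‖) ^ 2 * r t ∂μ := by
      have e : (fun t => (s * ‖u t‖ - ‖v t‖) ^ 2 * r t) = fun t =>
          ((s * s) * (‖u t‖ ^ 2 * r t) + (-2 * s) * (‖u t‖ * ‖v t‖ * r t)) + ‖v t‖ ^ 2 * r t := by
        ext t; ring
      have l13 : IntegrableOn (fun t => (s * s) * (‖u t‖ ^ 2 * r t) +
          (-2 * s) * (‖u t‖ * ‖v t‖ * r t)) (Ioc y x) μ := (l1.const_mul _).add (l3.const_mul _)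
      rw [e, integral_add l13 l2,
        integral_add (l1.const_mul _) (l3.const_mul _), integral_const_mul, integral_const_mul]
      ring
    rw [this]
    refine integral_nonneg_of_ae ?_
    filter_upwards [ae_restrict_of_ae hrpos] with t ht
    exact mul_nonneg (sq_nonneg _) ht.le
  have hd := discrim_le_zero hq
  rw [discrim] at hd
  have := pow_le_pow_left₀ (norm_nonneg _) hle 2
  nlinarith

/-- data of a homogeneous solution at `κ i` -/
def HS (w r q : ℝ → ℝ) (μ : Measure ℝ) (κ : ℝ) (u u1 : ℝ → ℂ) : Prop :=
  PR w μ u u1 (fun t => ((q t : ℂ) - (κ : ℂ) * Complex.I * (r t : ℂ)) * u t)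

noncomputable def hH (κ : ℝ) (u u1 v v1 : ℝ → ℂ) (x : ℝ) : ℂ :=
  (u x * (starRingEnd ℂ) (v1 x) - u1 x * (starRingEnd ℂ) (v x)) * (-(κ : ℂ) * Complex.I / 2)

noncomputable def hR (κ : ℝ) (u u1 : ℝ → ℂ) (x : ℝ) : ℝ := κ * (u x * (starRingEnd ℂ) (u1 x)).im

theorem hH_self {κ : ℝ} (u u1 : ℝ → ℂ) (x : ℝ) :
    hH κ u u1 u u1 x = (hR κ u u1 x : ℂ) := by
  simp only [hH, hR]
  apply Complex.ext
  · simp; ring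
  · simp; exact Or.inl (by ring)

theorem hH_green {κ : ℝ} (hκ : κ ^ 2 = 1) {u u1 v v1 : ℝ → ℂ} (hw : LocallyIntegrable w volume)
    (Pu : HS w r q μ κ u u1) (Pv : HS w r q μ κ v v1) {c x : ℝ} (hcx : c ≤ x) :
    hH κ u u1 v v1 x - hH κ u u1 v v1 c =
      ∫ t in Ioc c x, (r t : ℂ) * u t * (starRingEnd ℂ) (v t) ∂μ := by
  have g := PR.green Pu (PR.conj Pv) hw c x
  simp only [Wr] at g
  have : hH κ u u1 v v1 x - hH κ u u1 v v1 c = (-(κ : ℂ) * Complex.I / 2) *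
      ((u x * (starRingEnd ℂ) (v1 x) - u1 x * (starRingEnd ℂ) (v x)) -
      (u c * (starRingEnd ℂ) (v1 c) - u1 c * (starRingEnd ℂ) (v c))) := by
    simp only [hH]; ring
  rw [this, g, intervalIntegral.integral_of_le hcx, ← integral_const_mul]
  congr 1
  ext t
  simp only [map_mul, map_sub, Complex.conj_ofReal, Complex.conj_I]
  have hκ' : (κ : ℂ) ^ 2 = 1 := by exact_mod_cast hκ
  have hI : Complex.I ^ 2 = -1 := Complex.I_sq
  linear_combination (- (r t : ℂ) * u t * (starRingEnd ℂ) (v t) * Complex.I ^ 2) * hκ' -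
     ((r t : ℂ) * u t * (starRingEnd ℂ) (v t)) * hI

theorem hR_green {κ : ℝ} (hκ : κ ^ 2 = 1) {u u1 : ℝ → ℂ} (hw : LocallyIntegrable w volume)
    (Pu : HS w r q μ κ u u1) {c x : ℝ} (hcx : c ≤ x) :
    hR κ u u1 x - hR κ u u1 c = ∫ t in Ioc c x, ‖u t‖ ^ 2 * r t ∂μ := by
  have := hH_green hκ hw Pu Pu hcx
  rw [hH_self, hH_self] at this
  have e : (fun t => (r t : ℂ) * u t * (starRingEnd ℂ) (u t)) =
      fun t => ((‖u t‖ ^ 2 * r t : ℝ) : ℂ) := by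
    ext t; rw [mul_assoc, Complex.mul_conj, Complex.normSq_eq_norm_sq]; push_cast; ring
  rw [e, integral_complex_ofReal] at this
  exact_mod_cast this

theorem hR_mono {κ : ℝ} (hκ : κ ^ 2 = 1) {u u1 : ℝ → ℂ} (hw : LocallyIntegrable w volume)
    (hrpos : ∀ᵐ t ∂μ, 0 < r t)
    (Pu : HS w r q μ κ u u1) : Monotone (hR κ u u1) := by
  intro c x hcx
  have := hR_green hκ hw Pu hcx
  have h2 : 0 ≤ ∫ t in Ioc c x, ‖u t‖ ^ 2 * r t ∂μ := by
    refine integral_nonneg_of_ae ?_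
    filter_upwards [ae_restrict_of_ae hrpos] with t ht
    exact mul_nonneg (sq_nonneg _) ht.le
  linarith

theorem hR_ident {κ : ℝ} (hκ : κ ^ 2 = 1) (u u1 v v1 : ℝ → ℂ) (x : ℝ) :
    hR κ u u1 x * hR κ v v1 x = ‖hH κ u u1 v v1 x‖ ^ 2 - ‖Wr u u1 v v1 x‖ ^ 2 / 4 := by
  have hk : ‖(-(κ : ℂ) * Complex.I / 2)‖ ^ 2 = 1 / 4 := by
    simp only [norm_mul, norm_div, norm_neg, Complex.norm_I, Complex.norm_real, Real.norm_eq_abs]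
    rw [mul_one, div_pow, sq_abs, hκ]; norm_num
  rw [hH, norm_mul, mul_pow, hk, ← Complex.normSq_eq_norm_sq, ← Complex.normSq_eq_norm_sq, Wr]
  simp only [hR, Complex.normSq_apply]
  simp
  linear_combination ((-(u x).re * (u1 x).im + (u x).im * (u1 x).re) *
    (-(v x).re * (v1 x).im + (v x).im * (v1 x).re)) * hκ

theorem Wr_const {κ : ℝ} {u u1 v v1 : ℝ → ℂ} (hw : LocallyIntegrable w volume)
    (Pu : HS w r q μ κ u u1) (Pv : HS w r q μ κ v v1) (c x : ℝ) :
    Wr u u1 v v1 x = Wr u u1 v v1 c := by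
  have g := PR.green Pu Pv hw c x
  rw [← sub_eq_zero, g]
  rw [← intervalIntegral.integral_zero (μ := μ) (a := c) (b := x)]
  congr 1; ext t; ring

theorem right_le {κ : ℝ} (hκ : κ ^ 2 = 1) {u u1 v v1 : ℝ → ℂ} (hw : LocallyIntegrable w volume)
    (hr : LocallyIntegrable r μ) (hrpos : ∀ᵐ t ∂μ, 0 < r t)
    (Pu : HS w r q μ κ u u1) (Pv : HS w r q μ κ v v1)
    (hu : Integrable (fun t => ‖u t‖ ^ 2 * r t) μ)
    (hv : ¬ IntegrableOn (fun t => ‖v t‖ ^ 2 * r t) (Ioi 0) μ) : ∀ x, hR κ u u1 x ≤ 0 := by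
  have huc := PR.cont Pu hw
  have hvc := PR.cont Pv hw
  refine lim_le_zero (Hv := hR κ v v1) (Huv := hH κ u u1 v v1) (D := ‖Wr u u1 v v1 0‖ ^ 2 / 4)
    (hR_mono hκ hw hrpos Pu) (hR_mono hκ hw hrpos Pv) ?_ ?_ ?_ ?_
  · intro x; rw [hR_ident hκ, Wr_const hw Pu Pv 0 x]
  · intro y x hyx
    rw [hH_green hκ hw Pu Pv hyx, hR_green hκ hw Pu hyx, hR_green hκ hw Pv hyx]
    exact cs_int huc hvc hr hrpos y x
  · refine ⟨hR κ u u1 0 + ∫ t, ‖u t‖ ^ 2 * r t ∂μ, fun x => ?_⟩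
    have h1 := hR_mono hκ hw hrpos Pu (le_max_left x 0)
    have h2 := hR_green hκ hw Pu (le_max_right x 0)
    have h3 : ∫ t in Ioc 0 (max x 0), ‖u t‖ ^ 2 * r t ∂μ ≤ ∫ t, ‖u t‖ ^ 2 * r t ∂μ := by
      refine setIntegral_le_integral hu ?_
      filter_upwards [hrpos] with t ht
      exact mul_nonneg (sq_nonneg _) ht.le
    linarith
  · by_contra hcon
    push Not at hcon
    obtain ⟨B, hB⟩ := hcon
    refine hv (integrableOn_Ioi_of_intervalIntegral_norm_bounded (l := atTop) (b := fun x : ℝ => x)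
      (B - hR κ v v1 0) 0 (fun x => li_Ioc (li_sq hvc hr) 0 x) tendsto_id ?_)
    filter_upwards [eventually_ge_atTop 0] with x hx
    rw [intervalIntegral.integral_of_le hx]
    have : ∫ t in Ioc 0 x, ‖‖v t‖ ^ 2 * r t‖ ∂μ = ∫ t in Ioc 0 x, ‖v t‖ ^ 2 * r t ∂μ := by
      refine integral_congr_ae ?_
      filter_upwards [ae_restrict_of_ae hrpos] with t ht
      exact Real.norm_of_nonneg (mul_nonneg (sq_nonneg _) ht.le)
    rw [this, ← hR_green hκ hw Pv hx]
    linarith [hB x]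

theorem left_ge {κ : ℝ} (hκ : κ ^ 2 = 1) {u u1 v v1 : ℝ → ℂ} (hw : LocallyIntegrable w volume)
    (hr : LocallyIntegrable r μ) (hrpos : ∀ᵐ t ∂μ, 0 < r t)
    (Pu : HS w r q μ κ u u1) (Pv : HS w r q μ κ v v1)
    (hu : Integrable (fun t => ‖u t‖ ^ 2 * r t) μ)
    (hv : ¬ IntegrableOn (fun t => ‖v t‖ ^ 2 * r t) (Iic 0) μ) : ∀ x, 0 ≤ hR κ u u1 x := by
  have huc := PR.cont Pu hw
  have hvc := PR.cont Pv hw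
  suffices h : ∀ x, -hR κ u u1 (-x) ≤ 0 by
    intro x
    have := h (-x)
    rw [neg_neg] at this
    linarith
  refine lim_le_zero (Hu := fun x => -hR κ u u1 (-x)) (Hv := fun x => -hR κ v v1 (-x))
    (Huv := fun x => hH κ u u1 v v1 (-x)) (D := ‖Wr u u1 v v1 0‖ ^ 2 / 4) ?_ ?_ ?_ ?_ ?_ ?_
  · intro a b hab
    exact neg_le_neg (hR_mono hκ hw hrpos Pu (neg_le_neg hab))
  · intro a b hab
    exact neg_le_neg (hR_mono hκ hw hrpos Pv (neg_le_neg hab))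
  · intro x; rw [neg_mul_neg, hR_ident hκ, Wr_const hw Pu Pv 0 (-x)]
  · intro y x hyx
    have h1 := hR_green hκ hw Pu (neg_le_neg hyx)
    have h2 := hR_green hκ hw Pv (neg_le_neg hyx)
    rw [norm_sub_rev, hH_green hκ hw Pu Pv (neg_le_neg hyx), neg_sub_neg, neg_sub_neg, h1, h2]
    exact cs_int huc hvc hr hrpos _ _
  · refine ⟨-hR κ u u1 0 + ∫ t, ‖u t‖ ^ 2 * r t ∂μ, fun x => ?_⟩
    have h1 := hR_mono hκ hw hrpos Pu (min_le_left (-x) 0)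
    have h2 := hR_green hκ hw Pu (min_le_right (-x) 0)
    have h3 : ∫ t in Ioc (min (-x) 0) 0, ‖u t‖ ^ 2 * r t ∂μ ≤ ∫ t, ‖u t‖ ^ 2 * r t ∂μ := by
      refine setIntegral_le_integral hu ?_
      filter_upwards [hrpos] with t ht
      exact mul_nonneg (sq_nonneg _) ht.le
    linarith
  · by_contra hcon
    push Not at hcon
    obtain ⟨B, hB⟩ := hcon
    refine hv (integrableOn_Iic_of_intervalIntegral_norm_bounded (l := atBot) (a := fun x : ℝ => x)
      (B + hR κ v v1 0) 0 (fun x => li_Ioc (li_sq hvc hr) x 0) tendsto_id ?_)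
    filter_upwards [eventually_le_atBot 0] with x hx
    rw [intervalIntegral.integral_of_le hx]
    have : ∫ t in Ioc x 0, ‖‖v t‖ ^ 2 * r t‖ ∂μ = ∫ t in Ioc x 0, ‖v t‖ ^ 2 * r t ∂μ := by
      refine integral_congr_ae ?_
      filter_upwards [ae_restrict_of_ae hrpos] with t ht
      exact Real.norm_of_nonneg (mul_nonneg (sq_nonneg _) ht.le)
    rw [this, ← hR_green hκ hw Pv hx]
    have := hB (-x)
    rw [neg_neg] at this
    linarith

theorem sol_zero {κ : ℝ} (hκ : κ ^ 2 = 1) {u u1 v v1 y y1 : ℝ → ℂ} (hw : LocallyIntegrable w volume)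
    (hr : LocallyIntegrable r μ) (hrpos : ∀ᵐ t ∂μ, 0 < r t)
    (Pu : HS w r q μ κ u u1) (Pv : HS w r q μ κ v v1) (Py : HS w r q μ κ y y1)
    (hu : Integrable (fun t => ‖u t‖ ^ 2 * r t) μ)
    (hv : ¬ IntegrableOn (fun t => ‖v t‖ ^ 2 * r t) (Ioi 0) μ)
    (hy : ¬ IntegrableOn (fun t => ‖y t‖ ^ 2 * r t) (Iic 0) μ) : ∀ᵐ t ∂μ, u t = 0 := by
  have h0 : ∀ x, hR κ u u1 x = 0 := fun x => le_antisymm (right_le hκ hw hr hrpos Pu Pv hu hv x)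
    (left_ge hκ hw hr hrpos Pu Py hu hy x)
  have hn : 0 ≤ᵐ[μ] fun t => ‖u t‖ ^ 2 * r t := by
    filter_upwards [hrpos] with t ht
    exact mul_nonneg (sq_nonneg _) ht.le
  have hint : ∫ t, ‖u t‖ ^ 2 * r t ∂μ = 0 := by
    have h1 : ∀ n : ℕ, ∫ t in Ioc (-(n : ℝ)) n, ‖u t‖ ^ 2 * r t ∂μ = 0 := by
      intro n
      rw [← hR_green hκ hw Pu (show -(n : ℝ) ≤ n by linarith [Nat.cast_nonneg (α := ℝ) n]), h0, h0, sub_zero]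
    have h2 := (aecover_Ioc (μ := μ) (l := atTop) (a := fun n : ℕ => -(n : ℝ)) (b := fun n : ℕ => (n : ℝ))
      (tendsto_neg_atTop_atBot.comp tendsto_natCast_atTop_atTop)
      tendsto_natCast_atTop_atTop).integral_tendsto_of_countably_generated hu
    simp only [h1] at h2
    exact (tendsto_nhds_unique h2 tendsto_const_nhds)
  rw [integral_eq_zero_iff_of_nonneg_ae hn hu] at hint
  filter_upwards [hint, hrpos] with t ht hr
  have : ‖u t‖ ^ 2 = 0 := by
    rcases mul_eq_zero.1 ht with h | h
    · exact h
    · exact absurd h hr.ne'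
  simpa using this
end
set_option linter.unusedSectionVars false

/-- Any function satisfying the (junk-valued) integral identities is continuous. -/
theorem cont_of_int {u f : ℝ → ℂ} (h : ∀ c x : ℝ, c ≤ x → u x = u c + ∫ t in c..x, f t) :
    Continuous u := by
  by_cases hI : ∀ a b : ℝ, a ≤ b → IntervalIntegrable f volume a b
  · have hI' : ∀ a b : ℝ, IntervalIntegrable f volume a b := by
      intro a b
      rcases le_total a b with hab | hab
      · exact hI a b hab
      · exact (hI b a hab).symm
    have : u = fun x => u 0 + ∫ t in (0:ℝ)..x, f t := by
      ext x
      rcases le_total 0 x with hx | hx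
      · exact h 0 x hx
      · rw [intervalIntegral.integral_symm, h x 0 hx]; ring
    rw [this]
    exact continuous_const.add (intervalIntegral.continuous_primitive hI' 0)
  · push Not at hI
    obtain ⟨a, b, hab, hn⟩ := hI
    have hz : ∀ c x : ℝ, c ≤ x → ¬ IntervalIntegrable f volume c x → u x = u c := by
      intro c x hcx hni
      rw [h c x hcx, intervalIntegral.integral_undef hni, add_zero]
    have hfar : ∀ c x, c ≤ a → b ≤ x → u x = u c := by
      intro c x hc hx
      refine hz c x (hc.trans (hab.trans hx)) fun hi => hn ?_
      refine hi.mono_set ?_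
      rw [uIcc_of_le hab, uIcc_of_le (hc.trans (hab.trans hx))]
      exact Icc_subset_Icc hc hx
    have hba := hfar a b le_rfl le_rfl
    have hc : ∀ x, u x = u a := by
      intro x
      rcases le_total x a with hx | hx
      · rw [← hfar x b hx le_rfl, hba]
      rcases le_total b x with hx' | hx'
      · exact hfar a x le_rfl hx'
      by_cases h1 : IntervalIntegrable f volume a x
      · have : ¬ IntervalIntegrable f volume x b := fun h2 => hn (h1.trans h2)
        rw [← hz x b hx' this, hba]
      · exact hz a x hx h1
    have : u = fun _ => u a := funext hc
    rw [this]; exact continuous_const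

theorem lf_of {μ : Measure ℝ} {g : ℝ → ℝ} (hμ : ∀ c d : ℝ, c ≤ d → μ (Ioc c d) = ENNReal.ofReal (g d - g c)) :
    IsLocallyFiniteMeasure μ :=
  ⟨fun x => ⟨Ioc (x - 1) (x + 1), Ioc_mem_nhds (by linarith) (by linarith), by
    rw [hμ _ _ (by linarith)]; exact ENNReal.ofReal_lt_top⟩⟩

theorem sqWeight_eq (r : ℝ → ℝ) (u : ℝ → ℂ) (t : ℝ) :
    sqWeight r u t = ENNReal.ofReal (‖u t‖ ^ 2 * r t) := by
  rw [sqWeight, ENNReal.ofReal_mul (sq_nonneg _), ENNReal.ofReal_pow (norm_nonneg _), ofReal_norm]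
  rfl

theorem lint_lt_top {μ : Measure ℝ} {r : ℝ → ℝ} {u : ℝ → ℂ} {S : Set ℝ}
    (h : IntegrableOn (fun t => ‖u t‖ ^ 2 * r t) S μ) : ∫⁻ t in S, sqWeight r u t ∂μ < ∞ := by
  simp only [sqWeight_eq]
  exact h.lintegral_lt_top

theorem int_of_lint {μ : Measure ℝ} [IsLocallyFiniteMeasure μ] {r : ℝ → ℝ} {u : ℝ → ℂ} {S : Set ℝ} (hu : Continuous u)
    (hr : LocallyIntegrable r μ) (hrpos : ∀ᵐ t ∂μ, 0 < r t)
    (h : ∫⁻ t in S, sqWeight r u t ∂μ < ∞) : IntegrableOn (fun t => ‖u t‖ ^ 2 * r t) S μ := by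
  refine ⟨(li_sq hu hr).aestronglyMeasurable.restrict, ?_⟩
  rw [hasFiniteIntegral_iff_ofReal]
  · simpa only [sqWeight_eq] using h
  · filter_upwards [ae_restrict_of_ae hrpos] with t ht
    exact mul_nonneg (sq_nonneg _) ht.le

theorem not_bddAbove_of_lp {T : Set ℝ} {μ : Measure ℝ} [IsLocallyFiniteMeasure μ] {p r q : ℝ → ℝ}
    (hr : LocallyIntegrable r μ) (h : LimitPointRight T μ p r q) : ¬ BddAbove T := by
  rintro ⟨b, hb⟩
  obtain ⟨u, u1, hs, hn⟩ := h 0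
  have hu : Continuous u := cont_of_int fun c x hcx => (hs c x hcx).1
  refine hn fun c _ => lint_lt_top ((li_Icc (li_sq hu hr) c b).mono_set ?_)
  rintro t ⟨⟨h1, s, hs, h2⟩, -⟩
  exact ⟨h1, h2.le.trans (hb hs)⟩

theorem not_bddBelow_of_lp {T : Set ℝ} {μ : Measure ℝ} [IsLocallyFiniteMeasure μ] {p r q : ℝ → ℝ}
    (hr : LocallyIntegrable r μ) (h : LimitPointLeft T μ p r q) : ¬ BddBelow T := by
  rintro ⟨b, hb⟩
  obtain ⟨u, u1, hs, hn⟩ := h 0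
  have hu : Continuous u := cont_of_int fun c x hcx => (hs c x hcx).1
  refine hn fun c _ => lint_lt_top ((li_Icc (li_sq hu hr) b c).mono_set ?_)
  rintro t ⟨⟨⟨s, hs, h2⟩, h1⟩, -⟩
  exact ⟨(hb hs).trans h2.le, h1⟩

noncomputable def tsPi (T : Set ℝ) (t : ℝ) : ℝ := sInf {s | s ∈ T ∧ t ≤ s}

/-- A closed time scale, unbounded in both directions. -/
structure UT (T : Set ℝ) : Prop where
  cl : IsClosed T
  up : ¬ BddAbove T
  dn : ¬ BddBelow T

namespace UT
variable {T : Set ℝ}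

theorem kappa (H : UT T) : tsKappa T = T := by
  rw [tsKappa, if_neg (fun h => H.dn h.1)]

theorem ex_gt (H : UT T) (x : ℝ) : ∃ s ∈ T, x < s := not_bddAbove_iff.1 H.up x
theorem ex_lt (H : UT T) (x : ℝ) : ∃ s ∈ T, s < x := not_bddBelow_iff.1 H.dn x

theorem sig (H : UT T) (t : ℝ) : tsSigma T t = sInf {s | s ∈ T ∧ t < s} := by
  rw [tsSigma, if_pos]
  obtain ⟨s, h1, h2⟩ := H.ex_gt t
  exact ⟨s, h1, h2⟩

theorem rho (H : UT T) (t : ℝ) : tsRho T t = sSup {s | s ∈ T ∧ s < t} := by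
  rw [tsRho, if_pos]
  obtain ⟨s, h1, h2⟩ := H.ex_lt t
  exact ⟨s, h1, h2⟩

theorem bddPi (t : ℝ) : BddBelow {s | s ∈ T ∧ t ≤ s} := ⟨t, fun _ hs => hs.2⟩

theorem pi_mem (H : UT T) (t : ℝ) : tsPi T t ∈ T ∧ t ≤ tsPi T t := by
  obtain ⟨s, h1, h2⟩ := H.ex_gt t
  have hc : IsClosed {s | s ∈ T ∧ t ≤ s} := H.cl.inter isClosed_Ici
  exact hc.csInf_mem ⟨s, h1, h2.le⟩ (bddPi t)

theorem pi_le {t s : ℝ} (hs : s ∈ T) (hts : t ≤ s) : tsPi T t ≤ s :=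
  csInf_le (bddPi t) ⟨hs, hts⟩

theorem pi_self (H : UT T) {t : ℝ} (ht : t ∈ T) : tsPi T t = t :=
  le_antisymm (pi_le ht le_rfl) (H.pi_mem t).2

theorem pi_mono (H : UT T) : Monotone (tsPi T) := fun _ y hxy =>
  pi_le (H.pi_mem y).1 (hxy.trans (H.pi_mem y).2)

theorem extK_eq (H : UT T) (p : ℝ → ℂ) (t : ℝ) : extK T p t = p (tsPi T t) := by
  rw [extK, H.kappa]
  split_ifs with ht
  · rw [H.pi_self ht]
  · rw [H.sig, tsPi]
    congr 2
    ext s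
    constructor
    · rintro ⟨h1, h2⟩; exact ⟨h1, h2.le⟩
    · rintro ⟨h1, h2⟩; exact ⟨h1, lt_of_le_of_ne h2 (by rintro rfl; exact ht h1)⟩

theorem rho_mem (H : UT T) (t : ℝ) : tsRho T t ∈ T ∧ tsRho T t ≤ t := by
  rw [H.rho]
  obtain ⟨s, h1, h2⟩ := H.ex_lt t
  have hb : BddAbove {s | s ∈ T ∧ s < t} := ⟨t, fun _ hs => hs.2.le⟩
  constructor
  · have := csSup_mem_closure (s := {s | s ∈ T ∧ s < t}) ⟨s, h1, h2⟩ hb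
    exact H.cl.closure_subset_iff.2 (fun x hx => hx.1) this
  · exact csSup_le ⟨s, h1, h2⟩ fun _ hs => hs.2.le

theorem pi_lt_of (H : UT T) {t d : ℝ} (h : t < tsRho T d) : tsPi T t < d := by
  rw [H.rho] at h
  obtain ⟨s0, h1, h2⟩ := H.ex_lt d
  obtain ⟨s, ⟨hs, hsd⟩, hts⟩ := exists_lt_of_lt_csSup (s := {s | s ∈ T ∧ s < d}) ⟨s0, h1, h2⟩ h
  exact (pi_le hs hts.le).trans_lt hsd

theorem le_rho_of (H : UT T) {t d : ℝ} (h : tsPi T t < d) : t ≤ tsRho T d := by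
  rw [H.rho]
  refine (H.pi_mem t).2.trans (le_csSup ⟨d, fun _ hs => hs.2.le⟩ ⟨(H.pi_mem t).1, h⟩)

theorem nu_eq (H : UT T) {ν : Measure ℝ}
    (hν : ∀ c d : ℝ, c ≤ d → ν (Set.Ico c d) = ENNReal.ofReal (tsRho T d - tsRho T c)) :
    ν = Measure.map (tsPi T) volume := by
  have : IsLocallyFiniteMeasure ν :=
    ⟨fun x => ⟨Ico (x - 1) (x + 1), Ico_mem_nhds (by linarith) (by linarith), by
      rw [hν _ _ (by linarith)]; exact ENNReal.ofReal_lt_top⟩⟩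
  refine Measure.ext_of_Ico _ _ fun c d hcd => ?_
  rw [hν c d hcd.le, Measure.map_apply H.pi_mono.measurable measurableSet_Ico]
  refine le_antisymm ?_ ?_
  · rw [← Real.volume_Ioo]
    refine measure_mono fun t ht => ⟨?_, H.pi_lt_of ht.2⟩
    by_contra hlt
    exact absurd (H.le_rho_of (not_le.1 hlt)) (not_le.2 ht.1)
  · rw [← Real.volume_Icc]
    refine measure_mono fun t ht => ⟨?_, H.le_rho_of ht.2⟩
    by_contra hlt
    exact absurd ht.1 (not_le.2 (H.pi_lt_of (not_le.1 hlt)))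

theorem w_li (H : UT T) {ν : Measure ℝ} {p : ℝ → ℝ}
    (hν : ∀ c d : ℝ, c ≤ d → ν (Set.Ico c d) = ENNReal.ofReal (tsRho T d - tsRho T c))
    (hp : LocallyIntegrable (fun t => 1 / p t) ν) :
    LocallyIntegrable (fun t => 1 / p (tsPi T t)) volume := by
  have e := H.nu_eq hν
  subst e
  apply li_of_Icc
  intro a b
  have h1 := li_Icc hp (tsPi T a) (tsPi T b)
  rw [IntegrableOn, Measure.restrict_map H.pi_mono.measurable measurableSet_Icc] at h1
  have h2 := h1.comp_measurable H.pi_mono.measurable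
  exact IntegrableOn.mono_set (s := Icc a b) h2 fun x hx => ⟨H.pi_mono hx.1, H.pi_mono hx.2⟩

theorem w_ne (H : UT T) {ν : Measure ℝ} {p : ℝ → ℝ}
    (hν : ∀ c d : ℝ, c ≤ d → ν (Set.Ico c d) = ENNReal.ofReal (tsRho T d - tsRho T c))
    (hp : ∀ᵐ t ∂ν, p t ≠ 0) :
    ∀ᵐ t, 1 / p (tsPi T t) ≠ 0 := by
  rw [H.nu_eq hν] at hp
  filter_upwards [ae_of_ae_map H.pi_mono.measurable.aemeasurable hp] with t ht
  exact one_div_ne_zero ht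

theorem mu_gap (H : UT T) {μ : Measure ℝ}
    (hμ : ∀ c d : ℝ, c ≤ d → μ (Set.Ioc c d) = ENNReal.ofReal (tsSigma T d - tsSigma T c))
    {c d : ℝ} (hcd : c ≤ d) (h : ∀ s ∈ T, c < s → d < s) : μ (Ioc c d) = 0 := by
  rw [hμ c d hcd, H.sig, H.sig]
  have : {s | s ∈ T ∧ d < s} = {s | s ∈ T ∧ c < s} := by
    ext s
    exact ⟨fun hs => ⟨hs.1, hcd.trans_lt hs.2⟩, fun hs => ⟨hs.1, h s hs.1 hs.2⟩⟩
  rw [this]; simp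

theorem mu_compl (H : UT T) {μ : Measure ℝ}
    (hμ : ∀ c d : ℝ, c ≤ d → μ (Set.Ioc c d) = ENNReal.ofReal (tsSigma T d - tsSigma T c)) :
    μ Tᶜ = 0 := by
  refine measure_null_of_locally_null _ fun x hx => ?_
  obtain ⟨ε, hε, hb⟩ := Metric.isOpen_iff.1 H.cl.isOpen_compl x hx
  refine ⟨Ioc (x - ε / 2) (x + ε / 2), mem_nhdsWithin_of_mem_nhds
    (Ioc_mem_nhds (by linarith) (by linarith)), H.mu_gap hμ (by linarith) ?_⟩
  intro s hs h1
  by_contra h2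
  have : s ∈ Metric.ball x ε := by
    rw [Metric.mem_ball, Real.dist_eq, abs_lt]; constructor <;> linarith
  exact hb this hs

theorem mu_pos (H : UT T) {μ : Measure ℝ}
    (hμ : ∀ c d : ℝ, c ≤ d → μ (Set.Ioc c d) = ENNReal.ofReal (tsSigma T d - tsSigma T c))
    {t δ : ℝ} (ht : t ∈ T) (hδ : 0 < δ) : μ (Ioc (t - δ) (t + δ)) ≠ 0 := by
  rw [hμ _ _ (by linarith), H.sig, H.sig, ENNReal.ofReal_ne_zero_iff]
  have h1 : sInf {s | s ∈ T ∧ t - δ < s} ≤ t :=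
    csInf_le ⟨t - δ, fun _ hs => hs.2.le⟩ ⟨ht, by linarith⟩
  obtain ⟨s, hs, hs'⟩ := H.ex_gt (t + δ)
  have h2 : t + δ ≤ sInf {s | s ∈ T ∧ t + δ < s} :=
    le_csInf ⟨s, hs, hs'⟩ fun _ h => h.2.le
  linarith

theorem zero_on (H : UT T) {μ : Measure ℝ}
    (hμ : ∀ c d : ℝ, c ≤ d → μ (Set.Ioc c d) = ENNReal.ofReal (tsSigma T d - tsSigma T c))
    {u : ℝ → ℂ} (hu : Continuous u) {a b : ℝ} (hz : ∀ᵐ t ∂μ, t ∈ Ioc a b → u t = 0)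
    {t : ℝ} (ht : t ∈ T) (hab : t ∈ Ioo a b) : u t = 0 := by
  by_contra hne
  have hopen : IsOpen ({x | u x ≠ 0} ∩ Ioo a b) := (isOpen_ne_fun hu continuous_const).inter isOpen_Ioo
  obtain ⟨ε, hε, hb⟩ := Metric.isOpen_iff.1 hopen t ⟨hne, hab⟩
  refine H.mu_pos hμ ht (half_pos hε) (measure_mono_null ?_ hz)
  intro x hx
  have : x ∈ Metric.ball t ε := by
    rw [Metric.mem_ball, Real.dist_eq, abs_lt]; constructor <;> linarith [hx.1, hx.2]
  have := hb this
  exact fun hcon => this.1 (hcon ⟨this.2.1, this.2.2.le⟩)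

theorem uniq (H : UT T) {μ : Measure ℝ} [IsLocallyFiniteMeasure μ] {p : ℝ → ℝ}
    (hμ : ∀ c d : ℝ, c ≤ d → μ (Set.Ioc c d) = ENNReal.ofReal (tsSigma T d - tsSigma T c))
    (hw : LocallyIntegrable (fun t => 1 / p (tsPi T t)) volume)
    (hw0 : ∀ᵐ t, 1 / p (tsPi T t) ≠ 0)
    {u u1 h : ℝ → ℂ} (P : PR (fun t => 1 / p (tsPi T t)) μ u u1 h)
    {a b : ℝ} (hz : ∀ᵐ t ∂μ, t ∈ Ioc a b → u t = 0)
    {s t : ℝ} (hs : s ∈ T) (ht : t ∈ T) (has : a < s) (hst : s < t) (htb : t < b) :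
    (∀ x ∈ Icc s t, u x = 0) ∧ ∀ x ∈ Ico s t, u1 x = 0 := by
  have hu := P.cont hw
  have hT : ∀ x ∈ T, x ∈ Icc s t → u x = 0 := fun x hx hxI =>
    H.zero_on hμ hu hz hx ⟨has.trans_le hxI.1, hxI.2.trans_lt htb⟩
  have h0 : ∀ x ∈ Icc s t, u x = 0 := by
    intro x hx
    by_cases hxT : x ∈ T
    · exact hT x hxT hx
    set α := tsRho T x
    set β := tsPi T x
    have hα := H.rho_mem x
    have hβ := H.pi_mem x
    have hαx : α < x := lt_of_le_of_ne hα.2 (fun e => hxT (e ▸ hα.1))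
    have hxβ : x < β := lt_of_le_of_ne hβ.2 (fun e => hxT (e.symm ▸ hβ.1))
    have hβt : β ≤ t := pi_le ht hx.2
    have hsα : s ≤ α := by
      have : s < x := lt_of_le_of_ne hx.1 (fun e => hxT (e ▸ hs))
      have e : α = _ := H.rho x
      rw [e]; exact le_csSup ⟨x, fun _ h => h.2.le⟩ ⟨hs, this⟩
    -- no points of T in (α, β)
    have hgap : ∀ y ∈ T, α < y → β ≤ y := by
      intro y hy hay
      by_contra hlt
      push Not at hlt
      rcases lt_or_ge y x with hyx | hyx
      · have e : α = _ := H.rho x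
        have : y ≤ α := by rw [e]; exact le_csSup ⟨x, fun _ h => h.2.le⟩ ⟨hy, hyx⟩
        linarith
      · exact absurd (pi_le hy hyx) (not_le.2 hlt)
    have hpi : ∀ y ∈ Ioc α β, tsPi T y = β := fun y hy =>
      le_antisymm (pi_le hβ.1 hy.2) (hgap _ (H.pi_mem y).1 (hy.1.trans_le (H.pi_mem y).2))
    have hu1 : ∀ y ∈ Ico α β, u1 y = u1 α := by
      intro y hy
      have h1 : μ (Ioc α y) = 0 := H.mu_gap hμ hy.1 fun z hz hz' => hy.2.trans_le (hgap z hz hz')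
      have := P.e1 α y
      rw [intervalIntegral.integral_of_le hy.1, Measure.restrict_eq_zero.2 h1, integral_zero_measure] at this
      exact sub_eq_zero.1 this
    have hlin : ∀ y ∈ Icc α β, u y - u α = (y - α : ℝ) • (u1 α * ((1 / p β : ℝ) : ℂ)) := by
      intro y hy
      rw [P.e0 α y, ← intervalIntegral.integral_const]
      refine intervalIntegral.integral_congr_ae ?_
      have hne : ∀ᵐ z : ℝ, z ≠ β := by simp [ae_iff, measure_singleton]
      filter_upwards [hne] with z hz' hz
      rw [uIoc_of_le hy.1] at hz
      have hzβ : z < β := lt_of_le_of_ne (hz.2.trans hy.2) hz'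
      rw [hu1 z ⟨hz.1.le, hzβ⟩, hpi z ⟨hz.1, hzβ.le⟩]
    have hα0 : u α = 0 := hT α hα.1 ⟨hsα, hαx.le.trans hx.2⟩
    have hβ0 : u β = 0 := hT β hβ.1 ⟨hx.1.trans hxβ.le, hβt⟩
    have h1 := hlin β ⟨(hαx.trans hxβ).le, le_rfl⟩
    rw [hα0, hβ0, sub_zero] at h1
    have h2 : u1 α * ((1 / p β : ℝ) : ℂ) = 0 := by
      rcases smul_eq_zero.1 h1.symm with h | h
      · linarith
      · exact h
    have h3 := hlin x ⟨hαx.le, hxβ.le⟩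
    rw [h2, hα0, smul_zero, sub_zero] at h3
    exact h3
  refine ⟨h0, P.u1_zero ?_⟩
  have h1 := ae_zero_of_Ioc (P.li_u1w hw) hst.le (fun c x hc hcx hx => by
    rw [← intervalIntegral.integral_of_le hcx, ← P.e0, h0 x ⟨hc.trans hcx, hx⟩,
      h0 c ⟨hc, hcx.trans hx⟩, sub_zero])
  have h2 := ae_mono (Measure.restrict_mono Ioo_subset_Ioc_self le_rfl) h1
  filter_upwards [h2, ae_restrict_of_ae hw0] with x hx hx'
  rcases mul_eq_zero.1 hx with h | h
  · exact h
  · exact absurd (by exact_mod_cast h) hx'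

theorem pair_PR (H : UT T) {μ : Measure ℝ} [IsLocallyFiniteMeasure μ] {p : ℝ → ℝ}
    {u u1 h : ℝ → ℂ} (hh : LocallyIntegrable h μ) (P : IsPair T μ (cR p) u u1 h) :
    PR (fun t => 1 / p (tsPi T t)) μ u u1 h := by
  have e : ∀ t, u1 t / extK T (cR p) t = u1 t * ((1 / p (tsPi T t) : ℝ) : ℂ) := by
    intro t; rw [H.extK_eq, cR]; push_cast; ring
  refine ⟨hh, fun c x => ?_, fun c x => ?_⟩
  · simp only [← e]
    rcases le_total c x with hcx | hcx
    · rw [(P c x hcx).1]; ring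
    · rw [intervalIntegral.integral_symm, (P x c hcx).1]; ring
  · rcases le_total c x with hcx | hcx
    · rw [(P c x hcx).2, intervalIntegral.integral_of_le hcx]; ring
    · rw [intervalIntegral.integral_symm, intervalIntegral.integral_of_le hcx, (P x c hcx).2]; ring

theorem PR_pair (H : UT T) {μ : Measure ℝ} [IsLocallyFiniteMeasure μ] {p : ℝ → ℝ}
    {u u1 h : ℝ → ℂ} (P : PR (fun t => 1 / p (tsPi T t)) μ u u1 h) :
    IsPair T μ (cR p) u u1 h := by
  have e : ∀ t, u1 t / extK T (cR p) t = u1 t * ((1 / p (tsPi T t) : ℝ) : ℂ) := by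
    intro t; rw [H.extK_eq, cR]; push_cast; ring
  refine fun c x hcx => ⟨?_, ?_⟩
  · simp only [e]; rw [← P.e0]; ring
  · rw [← intervalIntegral.integral_of_le hcx, ← P.e1]; ring

theorem sol_HS (H : UT T) {μ : Measure ℝ} [IsLocallyFiniteMeasure μ] {p r q : ℝ → ℝ}
    (hr : LocallyIntegrable r μ) (hq : LocallyIntegrable q μ) {κ : ℝ}
    {u u1 : ℝ → ℂ} (P : IsSLSol T μ (cR p) (cR r) (cR q) ((κ : ℂ) * Complex.I) 0 u u1) :
    HS (fun t => 1 / p (tsPi T t)) r q μ κ u u1 := by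
  have hu : Continuous u := cont_of_int fun c x hcx => (P c x hcx).1
  refine H.pair_PR (li_mulc hu ((li_ofReal hq).sub ((li_ofReal hr).smul ((κ : ℂ) * Complex.I)))) ?_
  simpa [IsSLSol, cR] using P
end UT
set_option linter.unusedSectionVars false

/-- weighted measure -/
noncomputable def mm (r : ℝ → ℝ) (μ : Measure ℝ) : Measure ℝ := μ.withDensity fun t => ENNReal.ofReal (r t)

section
variable {r : ℝ → ℝ} {μ : Measure ℝ} [IsLocallyFiniteMeasure μ]

theorem mm_aem (hr : LocallyIntegrable r μ) : AEMeasurable (fun t => ENNReal.ofReal (r t)) μ :=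
  hr.aestronglyMeasurable.aemeasurable.ennreal_ofReal

theorem mm_ae (hr : LocallyIntegrable r μ) (hrpos : ∀ᵐ t ∂μ, 0 < r t) {P : ℝ → Prop} :
    (∀ᵐ t ∂(mm r μ), P t) ↔ ∀ᵐ t ∂μ, P t := by
  constructor
  · intro h
    have : μ ≪ mm r μ := withDensity_absolutelyContinuous' (mm_aem hr) (by
      filter_upwards [hrpos] with t ht
      simpa using ht)
    exact this.ae_le h
  · intro h
    exact (withDensity_absolutelyContinuous μ _).ae_le h

theorem mm_integral (hr : LocallyIntegrable r μ) (hrpos : ∀ᵐ t ∂μ, 0 < r t) (f : ℝ → ℂ) :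
    ∫ t, f t ∂(mm r μ) = ∫ t, (r t : ℂ) * f t ∂μ := by
  rw [mm, integral_withDensity_eq_integral_toReal_smul₀ (mm_aem hr)
    (Eventually.of_forall fun _ => ENNReal.ofReal_lt_top)]
  refine integral_congr_ae ?_
  filter_upwards [hrpos] with t ht
  rw [ENNReal.toReal_ofReal ht.le]; simp

theorem mm_inner (hr : LocallyIntegrable r μ) (hrpos : ∀ᵐ t ∂μ, 0 < r t)
    (F G : Lp ℂ 2 (mm r μ)) {f g : ℝ → ℂ} (hf : ∀ᵐ t ∂μ, F t = f t) (hg : ∀ᵐ t ∂μ, G t = g t) :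
    inner ℂ F G = ∫ t, (r t : ℂ) * ((starRingEnd ℂ) (f t) * g t) ∂μ := by
  rw [L2.inner_def, mm_integral hr hrpos]
  refine integral_congr_ae ?_
  filter_upwards [hf, hg] with t h1 h2
  rw [h1, h2, RCLike.inner_apply]; ring

theorem mm_fin (hr : LocallyIntegrable r μ) (a b : ℝ) : mm r μ (Icc a b) < ∞ := by
  rw [mm, withDensity_apply _ measurableSet_Icc]
  exact (li_Icc hr a b).lintegral_lt_top

theorem li_rG (hr : LocallyIntegrable r μ) (hrpos : ∀ᵐ t ∂μ, 0 < r t) (G : Lp ℂ 2 (mm r μ)) :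
    LocallyIntegrable (fun t => (r t : ℂ) * G t) μ := by
  apply li_of_Icc
  intro a b
  have : IsFiniteMeasure ((mm r μ).restrict (Icc a b)) :=
    ⟨by rw [Measure.restrict_apply_univ]; exact mm_fin hr a b⟩
  have h1 : Integrable G ((mm r μ).restrict (Icc a b)) :=
    ((Lp.memLp G).restrict _).integrable (by norm_num)
  generalize (G : ℝ → ℂ) = g at h1 ⊢
  rw [mm, restrict_withDensity measurableSet_Icc] at h1
  rw [integrable_withDensity_iff_integrable_smul₀' (mm_aem hr).restrict
    (Eventually.of_forall fun _ => ENNReal.ofReal_lt_top)] at h1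
  refine h1.congr ?_
  filter_upwards [ae_restrict_of_ae hrpos] with t ht
  rw [ENNReal.toReal_ofReal ht.le]; simp

theorem memLp_ind (hr : LocallyIntegrable r μ) {u : ℝ → ℂ} (hu : Continuous u) (a b : ℝ) :
    MemLp ((Ioc a b).indicator u) 2 (mm r μ) := by
  rw [memLp_indicator_iff_restrict measurableSet_Ioc]
  have : IsFiniteMeasure ((mm r μ).restrict (Ioc a b)) :=
    ⟨by rw [Measure.restrict_apply_univ]; exact (measure_mono Ioc_subset_Icc_self).trans_lt (mm_fin hr a b)⟩
  obtain ⟨C, hC⟩ := cont_lb hu a b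
  refine MemLp.of_bound hu.aestronglyMeasurable C ?_
  exact (ae_restrict_iff' measurableSet_Ioc).2 (Eventually.of_forall fun x hx => hC x (Ioc_subset_Icc_self hx))

theorem lint_Lp (hr : LocallyIntegrable r μ) (F : Lp ℂ 2 (mm r μ)) {u : ℝ → ℂ}
    (h : ∀ᵐ t ∂μ, F t = u t) : ∫⁻ t, sqWeight r u t ∂μ < ∞ := by
  have h1 := (Lp.memLp F).2
  have hm := Lp.aestronglyMeasurable F
  generalize (F : ℝ → ℂ) = g at h h1 hm
  rw [eLpNorm_lt_top_iff_lintegral_rpow_enorm_lt_top (by norm_num) (by norm_num)] at h1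
  rw [mm, lintegral_withDensity_eq_lintegral_mul₀' (mm_aem hr)] at h1
  · refine lt_of_le_of_lt (le_of_eq (lintegral_congr_ae ?_)) h1
    filter_upwards [h] with t ht
    simp only [Pi.mul_apply, ht, sqWeight]
    rw [mul_comm]
    congr 1
    simp
    rfl
  · exact hm.enorm.pow_const _

theorem memLp_of_lint (hr : LocallyIntegrable r μ) {u : ℝ → ℂ}
    (hu : AEStronglyMeasurable u μ)
    (h : ∫⁻ t, sqWeight r u t ∂μ < ∞) : MemLp u 2 (mm r μ) := by
  have hum : AEStronglyMeasurable u (mm r μ) := hu.mono_ac (withDensity_absolutelyContinuous μ _)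
  refine ⟨hum, ?_⟩
  rw [eLpNorm_lt_top_iff_lintegral_rpow_enorm_lt_top (by norm_num) (by norm_num)]
  rw [mm, lintegral_withDensity_eq_lintegral_mul₀' (mm_aem hr)]
  · refine lt_of_le_of_lt (le_of_eq (lintegral_congr_ae ?_)) h
    refine Eventually.of_forall fun t => ?_
    simp only [Pi.mul_apply, sqWeight]
    rw [mul_comm]
    congr 1
    simp
    rfl
  · exact hum.enorm.pow_const _
end
set_option linter.unusedSectionVars false

/-- abstract setting -/
structure Ctx (w r q : ℝ → ℝ) (μ : Measure ℝ) : Prop where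
  hw : LocallyIntegrable w volume
  hr : LocallyIntegrable r μ
  hq : LocallyIntegrable q μ
  hrpos : ∀ᵐ t ∂μ, 0 < r t
  uq : ∀ u u1 h : ℝ → ℂ, PR w μ u u1 h → (∀ᵐ t ∂μ, u t = 0) → (∀ x, u x = 0) ∧ ∀ x, u1 x = 0
  uql : ∃ N : ℕ, ∃ s : ℝ, ∀ u u1 h : ℝ → ℂ, PR w μ u u1 h →
    (∀ᵐ t ∂μ, t ∈ Ioc (-(N : ℝ)) N → u t = 0) → u s = 0 ∧ u1 s = 0
  lpr : ∀ κ : ℝ, ∃ v v1, HS w r q μ κ v v1 ∧ ¬ IntegrableOn (fun t => ‖v t‖ ^ 2 * r t) (Ioi 0) μ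
  lpl : ∀ κ : ℝ, ∃ v v1, HS w r q μ κ v v1 ∧ ¬ IntegrableOn (fun t => ‖v t‖ ^ 2 * r t) (Iic 0) μ

/-- density -/
noncomputable def dn (r q : ℝ → ℝ) (u g : ℝ → ℂ) (t : ℝ) : ℂ := (q t : ℂ) * u t - (r t : ℂ) * g t

namespace Ctx
variable {w r q : ℝ → ℝ} {μ : Measure ℝ} [IsLocallyFiniteMeasure μ]

/-- Green's formula in the form used below. -/
theorem gr (C : Ctx w r q μ) {u u1 v v1 g k : ℝ → ℂ} (P : PR w μ u u1 (dn r q u g))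
    (Q : PR w μ v v1 (dn r q v k)) (hg : LocallyIntegrable (fun t => (r t : ℂ) * g t) μ)
    (hk : LocallyIntegrable (fun t => (r t : ℂ) * k t) μ) (c x : ℝ) :
    Wr u u1 v v1 x - Wr u u1 v v1 c =
      (∫ t in c..x, (r t : ℂ) * (g t * v t) ∂μ) - ∫ t in c..x, (r t : ℂ) * (u t * k t) ∂μ := by
  have l1 : LocallyIntegrable (fun t => (r t : ℂ) * (g t * v t)) μ := by
    simpa only [mul_assoc] using li_mulc (Q.cont C.hw) hg
  have l2 : LocallyIntegrable (fun t => (r t : ℂ) * (u t * k t)) μ := by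
    have := li_cmul (P.cont C.hw) hk
    refine this.congr (Eventually.of_forall fun t => ?_)
    simp only []; ring
  rw [P.green Q C.hw, ← intervalIntegral.integral_sub (li_int l1 _ _) (li_int l2 _ _)]
  congr 1
  ext t
  simp only [dn]; ring

theorem dn_conj (u g : ℝ → ℂ) : (fun t => (starRingEnd ℂ) (dn r q u g t)) =
    dn r q (fun t => (starRingEnd ℂ) (u t)) (fun t => (starRingEnd ℂ) (g t)) := by
  ext t; simp [dn]

theorem cj {u u1 g : ℝ → ℂ} (P : PR w μ u u1 (dn r q u g)) :
    PR w μ (fun t => (starRingEnd ℂ) (u t)) (fun t => (starRingEnd ℂ) (u1 t))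
      (dn r q (fun t => (starRingEnd ℂ) (u t)) (fun t => (starRingEnd ℂ) (g t))) := by
  rw [← dn_conj]; exact P.conj

theorem li_cj {g : ℝ → ℂ} (h : LocallyIntegrable (fun t => (r t : ℂ) * g t) μ) :
    LocallyIntegrable (fun t => (r t : ℂ) * (starRingEnd ℂ) (g t)) μ := by
  simpa using li_conj h

/-- the graph of the maximal operator -/
def GG (C : Ctx w r q μ) : Submodule ℂ (Lp ℂ 2 (mm r μ) × Lp ℂ 2 (mm r μ)) where
  carrier := {x | ∃ u u1, PR w μ u u1 (dn r q u x.2) ∧ ∀ᵐ t ∂μ, x.1 t = u t}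
  zero_mem' := by
    refine ⟨0, 0, ⟨?_, by simp, ?_⟩, ?_⟩
    · refine (locallyIntegrable_zero : LocallyIntegrable (fun _ => (0 : ℂ)) μ).congr ?_
      filter_upwards [(mm_ae C.hr C.hrpos).1 (Lp.coeFn_zero ℂ 2 (mm r μ))] with t ht
      simp only [Prod.snd_zero, dn]; rw [ht]; simp
    · intro c x
      simp only [Pi.zero_apply, sub_zero]
      rw [← intervalIntegral.integral_zero (μ := μ) (a := c) (b := x)]
      refine intervalIntegral.integral_congr_ae ?_
      filter_upwards [(mm_ae C.hr C.hrpos).1 (Lp.coeFn_zero ℂ 2 (mm r μ))] with t ht _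
      simp only [Prod.snd_zero, dn]; rw [ht]; simp
    · exact (mm_ae C.hr C.hrpos).1 (Lp.coeFn_zero ℂ 2 (mm r μ))
  add_mem' := by
    rintro ⟨F, G⟩ ⟨F', G'⟩ ⟨u, u1, P, hu⟩ ⟨v, v1, Q, hv⟩
    refine ⟨_, _, (P.add Q C.hw).congr_h ?_, ?_⟩
    · filter_upwards [(mm_ae C.hr C.hrpos).1 (Lp.coeFn_add G G')] with t ht
      simp only [dn, Prod.snd_add]; rw [ht]; simp; ring
    · filter_upwards [(mm_ae C.hr C.hrpos).1 (Lp.coeFn_add F F'), hu, hv] with t ht h1 h2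
      simp only [Prod.fst_add]; rw [ht, Pi.add_apply, ← h1, ← h2]
  smul_mem' := by
    rintro a ⟨F, G⟩ ⟨u, u1, P, hu⟩
    refine ⟨_, _, (P.smul a).congr_h ?_, ?_⟩
    · filter_upwards [(mm_ae C.hr C.hrpos).1 (Lp.coeFn_smul a G)] with t ht
      have e : (a • (F, G) : Lp ℂ 2 (mm r μ) × Lp ℂ 2 (mm r μ)).2 = a • G := rfl
      simp only [dn]; rw [e, ht]; simp; ring
    · filter_upwards [(mm_ae C.hr C.hrpos).1 (Lp.coeFn_smul a F), hu] with t ht h1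
      have e : (a • (F, G) : Lp ℂ 2 (mm r μ) × Lp ℂ 2 (mm r μ)).1 = a • F := rfl
      rw [e, ht, Pi.smul_apply, ← h1, smul_eq_mul]

/-- compactly supported elements of the graph -/
def G0 (w r q : ℝ → ℝ) (μ : Measure ℝ) : Set (Lp ℂ 2 (mm r μ) × Lp ℂ 2 (mm r μ)) :=
  {x | ∃ u u1, ∃ N : ℕ, PR w μ u u1 (dn r q u x.2) ∧ (∀ᵐ t ∂μ, x.1 t = u t) ∧
    (∀ x : ℝ, x ≤ -N → u x = 0 ∧ u1 x = 0) ∧ (∀ x : ℝ, (N : ℝ) ≤ x → u x = 0 ∧ u1 x = 0) ∧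
    ∀ᵐ t ∂μ, t ∉ Ioc (-(N : ℝ)) N → x.2 t = 0}

theorem int_ioc {f : ℝ → ℂ} (N : ℕ) (h : ∀ᵐ t ∂μ, t ∉ Ioc (-(N : ℝ)) N → f t = 0) :
    ∫ t in (-(N : ℝ))..N, f t ∂μ = ∫ t, f t ∂μ := by
  rw [intervalIntegral.integral_of_le (by linarith [Nat.cast_nonneg (α := ℝ) N])]
  exact setIntegral_eq_integral_of_ae_compl_eq_zero h

/-- The pairing identity for a compactly supported pair against an arbitrary pair. -/
theorem pairing (C : Ctx w r q μ) {f f1 : ℝ → ℂ} {F1 g : Lp ℂ 2 (mm r μ)} (N : ℕ)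
    (P : PR w μ f f1 (dn r q f g)) (hF : ∀ᵐ t ∂μ, F1 t = f t)
    (hl : ∀ x : ℝ, x ≤ -N → f x = 0 ∧ f1 x = 0)
    (hR : ∀ x : ℝ, (N : ℝ) ≤ x → f x = 0 ∧ f1 x = 0)
    (hg : ∀ᵐ t ∂μ, t ∉ Ioc (-(N : ℝ)) N → g t = 0)
    {u u1 : ℝ → ℂ} {G : Lp ℂ 2 (mm r μ)} (Q : PR w μ u u1 (dn r q u G)) :
    ∫ t, (r t : ℂ) * ((starRingEnd ℂ) (g t) * u t) ∂μ = inner ℂ F1 G := by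
  have h := C.gr (cj P) Q (li_cj (li_rG C.hr C.hrpos g)) (li_rG C.hr C.hrpos G) (-(N : ℝ)) N
  simp only [Wr, hl _ le_rfl, hR _ le_rfl] at h
  rw [int_ioc, int_ioc] at h
  · rw [mm_inner C.hr C.hrpos F1 G hF (Eventually.of_forall fun _ => rfl)]
    simp only [map_zero, zero_mul, sub_zero] at h
    exact (sub_eq_zero.1 h.symm)
  · refine Eventually.of_forall fun t ht => ?_
    have : f t = 0 := by
      by_cases h1 : t ≤ -(N : ℝ)
      · exact (hl t h1).1
      · refine (hR t ?_).1
        by_contra h2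
        exact ht ⟨not_le.1 h1, (not_le.1 h2).le⟩
    rw [this]; simp
  · filter_upwards [hg] with t ht ht'
    rw [ht ht']; simp

theorem ha (C : Ctx w r q μ) (f g F G : Lp ℂ 2 (mm r μ)) (h0 : (f, g) ∈ G0 w r q μ)
    (h1 : (F, G) ∈ C.GG) : inner ℂ g F = inner ℂ f G := by
  obtain ⟨v, v1, N, P, hf, hl, hR, hg⟩ := h0
  obtain ⟨u, u1, Q, hF⟩ := h1
  rw [← C.pairing N P hf hl hR hg Q]
  exact mm_inner C.hr C.hrpos g F (Eventually.of_forall fun _ => rfl) hF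

theorem hd (C : Ctx w r q μ) (G : Lp ℂ 2 (mm r μ)) (h : (0, G) ∈ C.GG) : G = 0 := by
  obtain ⟨u, u1, P, hF⟩ := h
  have hu0 : ∀ᵐ t ∂μ, u t = 0 := by
    filter_upwards [hF, (mm_ae C.hr C.hrpos).1 (Lp.coeFn_zero ℂ 2 (mm r μ))] with t h1 h2
    rw [← h1]; exact h2
  obtain ⟨h0, h1⟩ := C.uq u u1 _ P hu0
  have hz : ∀ n : ℕ, ∀ᵐ t ∂μ, t ∈ Ioc (-(n : ℝ)) n → dn r q u G t = 0 := by
    intro n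
    rw [← ae_restrict_iff' measurableSet_Ioc]
    refine ae_zero_of_Ioc P.li (by linarith [Nat.cast_nonneg (α := ℝ) n]) ?_
    intro c x _ hcx _
    rw [← intervalIntegral.integral_of_le hcx, ← P.e1, h1, h1, sub_zero]
  refine Lp.ext ((mm_ae C.hr C.hrpos).2 ?_)
  filter_upwards [ae_all_iff.2 hz, C.hrpos, (mm_ae C.hr C.hrpos).1 (Lp.coeFn_zero ℂ 2 (mm r μ))] with t h2 h3 h4
  rw [h4]
  obtain ⟨n, hn⟩ := exists_nat_gt |t|
  have := h2 n ⟨by linarith [neg_abs_le t], by linarith [le_abs_self t]⟩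
  rw [dn, h0, mul_zero, zero_sub, neg_eq_zero] at this
  rcases mul_eq_zero.1 this with h | h
  · exact absurd (by exact_mod_cast h) h3.ne'
  · exact h

theorem hc (C : Ctx w r q μ) {κ : ℝ} (hκ : κ ^ 2 = 1) (F : Lp ℂ 2 (mm r μ))
    (h : (F, ((κ : ℂ) * Complex.I) • F) ∈ C.GG) : F = 0 := by
  obtain ⟨u, u1, P, hF⟩ := h
  have Pu : HS w r q μ κ u u1 := by
    refine P.congr_h ?_
    filter_upwards [hF, (mm_ae C.hr C.hrpos).1 (Lp.coeFn_smul ((κ : ℂ) * Complex.I) F)] with t h1 h2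
    simp only [dn]
    rw [h2, Pi.smul_apply, smul_eq_mul]
    change F t = u t at h1
    rw [h1]; ring
  obtain ⟨v, v1, Pv, hv⟩ := C.lpr κ
  obtain ⟨y, y1, Py, hy⟩ := C.lpl κ
  have hi : Integrable (fun t => ‖u t‖ ^ 2 * r t) μ := by
    rw [← integrableOn_univ]
    refine int_of_lint (P.cont C.hw) C.hr C.hrpos ?_
    rw [Measure.restrict_univ]
    exact lint_Lp C.hr F hF
  have := sol_zero hκ C.hw C.hr C.hrpos Pu Pv Py hi hv hy
  refine Lp.ext ((mm_ae C.hr C.hrpos).2 ?_)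
  filter_upwards [this, hF, (mm_ae C.hr C.hrpos).1 (Lp.coeFn_zero ℂ 2 (mm r μ))] with t h1 h2 h3
  rw [h3, h2, h1]; rfl

end Ctx
set_option linter.unusedSectionVars false

namespace Ctx
variable {w r q : ℝ → ℝ} {μ : Measure ℝ} [IsLocallyFiniteMeasure μ]

theorem li_r0 : LocallyIntegrable (fun t => (r t : ℂ) * (fun _ : ℝ => (0 : ℂ)) t) μ := by
  simpa using (locallyIntegrable_zero : LocallyIntegrable (fun _ => (0 : ℂ)) μ)

theorem w0 {f f1 a a1 b b1 : ℂ} (h1 : f * a1 - f1 * a = 0) (h2 : f * b1 - f1 * b = 0)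
    (h : a * b1 - a1 * b = 1) : f = 0 ∧ f1 = 0 := by
  constructor
  · linear_combination a * h2 - b * h1 - f * h
  · linear_combination a1 * h2 - b1 * h1 - f1 * h

theorem loc (C : Ctx w r q μ) {F G : Lp ℂ 2 (mm r μ)} {u u1 y y1 x x1 : ℝ → ℂ}
    (Q : PR w μ u u1 (dn r q u G)) (Y : PR w μ y y1 (dn r q y (fun _ => 0)))
    (X : PR w μ x x1 (dn r q x (fun _ => 0))) (hW : ∀ t, Wr y y1 x x1 t = 1)
    (H : ∀ f g, (f, g) ∈ G0 w r q μ → inner ℂ g F = inner ℂ f G) (n : ℕ) :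
    ∃ α β : ℂ, ∀ᵐ t ∂μ, t ∈ Ioc (-(n : ℝ)) n → F t - u t = α * y t + β * x t := by
  have hn : -(n : ℝ) ≤ n := by linarith [Nat.cast_nonneg (α := ℝ) n]
  set I : Set ℝ := Ioc (-(n : ℝ)) n with hI
  have aec : ∀ {g : ℝ → ℂ} (hg : MemLp g 2 (mm r μ)), ∀ᵐ t ∂μ, (hg.toLp _) t = g t :=
    fun hg => (mm_ae C.hr C.hrpos).1 hg.coeFn_toLp
  have mY := memLp_ind C.hr (Y.cont C.hw) (-(n : ℝ)) n
  have mX := memLp_ind C.hr (X.cont C.hw) (-(n : ℝ)) n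
  have mU := memLp_ind C.hr (Q.cont C.hw) (-(n : ℝ)) n
  have mF : MemLp (I.indicator F) 2 (mm r μ) := (Lp.memLp F).indicator measurableSet_Ioc
  have hD : (mF.toLp _) - (mU.toLp _) ∈ Submodule.span ℂ {(mY.toLp _), (mX.toLp _)} := by
    have : FiniteDimensional ℂ (Submodule.span ℂ ({(mY.toLp _), (mX.toLp _)} : Set (Lp ℂ 2 (mm r μ)))) :=
      FiniteDimensional.span_of_finite ℂ (by simp)
    rw [← Submodule.orthogonal_orthogonal (Submodule.span ℂ ({(mY.toLp _), (mX.toLp _)} : Set (Lp ℂ 2 (mm r μ)))),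
      Submodule.mem_orthogonal]
    intro φ hφ
    rw [Submodule.mem_orthogonal] at hφ
    have hφY := hφ _ (Submodule.subset_span (by simp : (mY.toLp _) ∈ _))
    have hφX := hφ _ (Submodule.subset_span (by simp : (mX.toLp _) ∈ _))
    have mφ : MemLp (I.indicator φ) 2 (mm r μ) := (Lp.memLp φ).indicator measurableSet_Ioc
    have eφ := aec mφ
    set ψ : Lp ℂ 2 (mm r μ) := (mφ.toLp _) with hψ
    obtain ⟨f, f1, P, hf0, hf1⟩ := exists_sol C.hw (li_ofReal C.hq) (li_rG C.hr C.hrpos ψ) (-(n : ℝ)) 0 0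
    replace P : PR w μ f f1 (dn r q f ψ) := P
    have off : ∀ᵐ t ∂μ, t ∉ I → ψ t = 0 := by
      filter_upwards [eφ] with t ht h
      rw [ht, indicator_of_notMem h]
    have key : ∀ {y y1 : ℝ → ℂ} (_ : PR w μ y y1 (dn r q y (fun _ => 0)))
        (mY : MemLp ((Ioc (-(n : ℝ)) n).indicator y) 2 (mm r μ)) (_ : inner ℂ (mY.toLp _) φ = 0) (s : ℝ),
        (s ≤ -n ∨ (n : ℝ) ≤ s) →
        f s * (starRingEnd ℂ) (y1 s) - f1 s * (starRingEnd ℂ) (y s) = 0 := by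
      intro y y1 Y mY hY s hs
      have g := C.gr P (cj Y) (li_rG C.hr C.hrpos ψ) (li_cj li_r0) (-(n : ℝ)) s
      simp only [Wr, hf0, hf1, map_zero, mul_zero, zero_mul, sub_zero,
        intervalIntegral.integral_zero] at g
      rw [g]
      rcases hs with hs | hs
      · rw [intervalIntegral.integral_symm, neg_eq_zero, intervalIntegral.integral_of_le hs,
          ← integral_zero ℝ ℂ (μ := μ.restrict (Ioc s (-(n : ℝ))))]
        refine setIntegral_congr_ae measurableSet_Ioc ?_
        filter_upwards [off] with t ht hts
        rw [ht (fun h => absurd h.1 (not_lt.2 hts.2))]; simp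
      · rw [mm_inner C.hr C.hrpos _ φ (aec mY) (Eventually.of_forall fun _ => rfl)] at hY
        rw [← hY, intervalIntegral.integral_of_le (hn.trans hs),
          setIntegral_eq_integral_of_ae_compl_eq_zero]
        · refine integral_congr_ae ?_
          filter_upwards [eφ] with t ht
          rw [ht]
          by_cases h : t ∈ I
          · rw [indicator_of_mem h, indicator_of_mem h]; ring
          · rw [indicator_of_notMem h, indicator_of_notMem h]; simp
        · filter_upwards [off] with t ht hts
          rw [ht (fun h => hts ⟨h.1, h.2.trans hs⟩)]; simp
    have hz : ∀ s : ℝ, (s ≤ -n ∨ (n : ℝ) ≤ s) → f s = 0 ∧ f1 s = 0 := by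
      intro s hs
      refine w0 (key Y mY hφY s hs) (key X mX hφX s hs) ?_
      have := congrArg (starRingEnd ℂ) (hW s)
      simpa [Wr] using this
    have mf := memLp_ind C.hr (P.cont C.hw) (-(n : ℝ)) n
    have ef : ∀ᵐ t ∂μ, (mf.toLp _) t = f t := by
      filter_upwards [aec mf] with t ht
      rw [ht]
      by_cases h : t ∈ Ioc (-(n : ℝ)) n
      · rw [indicator_of_mem h]
      · rw [indicator_of_notMem h, (hz t _).1]
        by_contra hcon
        push Not at hcon
        exact h ⟨hcon.1, hcon.2.le⟩
    have hl : ∀ s : ℝ, s ≤ -(n : ℝ) → f s = 0 ∧ f1 s = 0 := fun s hs => hz s (Or.inl hs)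
    have hR : ∀ s : ℝ, (n : ℝ) ≤ s → f s = 0 ∧ f1 s = 0 := fun s hs => hz s (Or.inr hs)
    have h1 := H (mf.toLp _) ψ ⟨f, f1, n, P, ef, hl, hR, off⟩
    rw [← C.pairing n P ef hl hR off Q, mm_inner C.hr C.hrpos ψ F (Eventually.of_forall fun _ => rfl)
      (Eventually.of_forall fun _ => rfl)] at h1
    rw [inner_sub_right, sub_eq_zero,
      mm_inner C.hr C.hrpos φ _ (Eventually.of_forall fun _ => rfl) (aec mF),
      mm_inner C.hr C.hrpos φ _ (Eventually.of_forall fun _ => rfl) (aec mU)]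
    have sw : ∀ g : ℝ → ℂ, ∫ t, (r t : ℂ) * ((starRingEnd ℂ) (φ t) * I.indicator g t) ∂μ =
        ∫ t, (r t : ℂ) * ((starRingEnd ℂ) (ψ t) * g t) ∂μ := by
      intro g
      refine integral_congr_ae ?_
      filter_upwards [eφ] with t ht
      rw [ht]
      by_cases h : t ∈ I
      · rw [indicator_of_mem h, indicator_of_mem h]
      · rw [indicator_of_notMem h, indicator_of_notMem h]; simp
    rw [sw, sw, h1]
  obtain ⟨α, β, e⟩ := Submodule.mem_span_pair.1 hD
  refine ⟨α, β, ?_⟩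
  have e1 := (mm_ae C.hr C.hrpos).1 (Lp.coeFn_add (α • (mY.toLp _)) (β • (mX.toLp _)))
  have e2 := (mm_ae C.hr C.hrpos).1 (Lp.coeFn_smul α (mY.toLp _))
  have e3 := (mm_ae C.hr C.hrpos).1 (Lp.coeFn_smul β (mX.toLp _))
  have e4 := (mm_ae C.hr C.hrpos).1 (Lp.coeFn_sub (mF.toLp _) (mU.toLp _))
  rw [e] at e1
  filter_upwards [e1, e2, e3, e4, aec mY, aec mX, aec mF, aec mU] with t h1 h2 h3 h4 h5 h6 h7 h8 ht
  rw [h4] at h1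
  simp only [Pi.sub_apply, Pi.add_apply] at h1
  rw [h2, h3] at h1
  simp only [Pi.smul_apply, smul_eq_mul] at h1
  rw [h5, h6, h7, h8, indicator_of_mem ht, indicator_of_mem ht, indicator_of_mem ht,
    indicator_of_mem ht] at h1
  exact h1

theorem hb (C : Ctx w r q μ) (F G : Lp ℂ 2 (mm r μ))
    (H : ∀ f g, (f, g) ∈ G0 w r q μ → inner ℂ g F = inner ℂ f G) : (F, G) ∈ C.GG := by
  obtain ⟨u, u1, Q, -, -⟩ := exists_sol C.hw (li_ofReal C.hq) (li_rG C.hr C.hrpos G) 0 0 0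
  replace Q : PR w μ u u1 (dn r q u G) := Q
  obtain ⟨y, y1, Y, hy, hy1⟩ := exists_sol C.hw (li_ofReal C.hq) (li_r0 (r := r)) 0 1 0
  obtain ⟨x, x1, X, hx, hx1⟩ := exists_sol C.hw (li_ofReal C.hq) (li_r0 (r := r)) 0 0 1
  replace Y : PR w μ y y1 (dn r q y (fun _ => 0)) := Y
  replace X : PR w μ x x1 (dn r q x (fun _ => 0)) := X
  have hW : ∀ t, Wr y y1 x x1 t = 1 := by
    intro t
    have g := C.gr Y X li_r0 li_r0 0 t
    simp only [Wr, hy, hy1, hx, hx1, mul_zero, zero_mul, sub_zero, mul_one,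
      intervalIntegral.integral_zero] at g
    simp only [Wr]
    linear_combination g
  choose α β hab using C.loc Q Y X hW H
  obtain ⟨N, s, hs⟩ := C.uql
  have hcst : ∀ n, N ≤ n → α n = α N ∧ β n = β N := by
    intro n hn
    have R := ((Y.smul (α n - α N)).add (X.smul (β n - β N)) C.hw)
    obtain ⟨k0, k1⟩ := hs _ _ _ R (by
      filter_upwards [hab n, hab N] with t h1 h2 ht
      have hn' : (N : ℝ) ≤ n := by exact_mod_cast hn
      have a1 := h1 ⟨by linarith [ht.1], ht.2.trans hn'⟩
      have a2 := h2 ht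
      linear_combination a2 - a1)
    have hw := hW s
    simp only [Wr] at hw
    constructor
    · linear_combination x1 s * k0 - x s * k1 - (α n - α N) * hw
    · linear_combination y s * k1 - y1 s * k0 - (β n - β N) * hw
  refine ⟨_, _, ((Q.add (Y.smul (α N)) C.hw).add (X.smul (β N)) C.hw).congr_h ?_, ?_⟩
  · refine Eventually.of_forall fun t => ?_
    simp only [dn]; ring
  · filter_upwards [ae_all_iff.2 hab] with t ht
    obtain ⟨n, hn⟩ := exists_nat_gt (max |t| N)
    have hn1 := (le_max_left _ _).trans_lt hn
    have hn2 : N ≤ n := by exact_mod_cast ((le_max_right _ _).trans_lt hn).le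
    have := ht n ⟨by linarith [neg_abs_le t], by linarith [le_abs_self t]⟩
    rw [(hcst n hn2).1, (hcst n hn2).2] at this
    change F t = _
    linear_combination this

end Ctx
set_option linter.unusedSectionVars false

theorem mk_ctx {T : Set ℝ} (H : UT T) {μ ν : Measure ℝ} [IsLocallyFiniteMeasure μ]
    (hμ : ∀ c d : ℝ, c ≤ d → μ (Set.Ioc c d) = ENNReal.ofReal (tsSigma T d - tsSigma T c))
    (hν : ∀ c d : ℝ, c ≤ d → ν (Set.Ico c d) = ENNReal.ofReal (tsRho T d - tsRho T c))
    {p r q : ℝ → ℝ}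
    (hr : LocallyIntegrable r μ) (hrpos : ∀ᵐ t ∂μ, 0 < r t)
    (hq : LocallyIntegrable q μ)
    (hpne : ∀ᵐ t ∂ν, p t ≠ 0) (hp : LocallyIntegrable (fun t => 1 / p t) ν)
    (hlpa : LimitPointLeft T μ p r q) (hlpb : LimitPointRight T μ p r q) :
    Ctx (fun t => 1 / p (tsPi T t)) r q μ where
  hw := H.w_li hν hp
  hr := hr
  hq := hq
  hrpos := hrpos
  uq := by
    intro u u1 h P hz
    have : ∀ x, u x = 0 ∧ u1 x = 0 := by
      intro x
      obtain ⟨s, hs, hsx⟩ := H.ex_lt x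
      obtain ⟨t, ht, hxt⟩ := H.ex_gt x
      have := H.uniq hμ (H.w_li hν hp) (H.w_ne hν hpne) P (a := s - 1) (b := t + 1)
        (hz.mono fun _ hx _ => hx) hs ht (by linarith) (hsx.trans hxt) (by linarith)
      exact ⟨this.1 x ⟨hsx.le, hxt.le⟩, this.2 x ⟨hsx.le, hxt⟩⟩
    exact ⟨fun x => (this x).1, fun x => (this x).2⟩
  uql := by
    obtain ⟨s, hs, -⟩ := H.ex_lt 0
    obtain ⟨t, ht, hst⟩ := H.ex_gt s
    obtain ⟨N, hN⟩ := exists_nat_gt (max |s| |t|)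
    have h1 := (le_max_left _ _).trans_lt hN
    have h2 := (le_max_right _ _).trans_lt hN
    refine ⟨N, s, fun u u1 h P hz => ?_⟩
    have := H.uniq hμ (H.w_li hν hp) (H.w_ne hν hpne) P hz hs ht
      (by linarith [neg_abs_le s]) hst (by linarith [le_abs_self t])
    exact ⟨this.1 s ⟨le_rfl, hst.le⟩, this.2 s ⟨le_rfl, hst⟩⟩
  lpr := by
    intro κ
    obtain ⟨v, v1, hv, hn⟩ := hlpb ((κ : ℂ) * Complex.I)
    have hc : Continuous v := cont_of_int fun c x hcx => (hv c x hcx).1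
    refine ⟨v, v1, H.sol_HS hr hq hv, fun hi => hn fun c _ => lint_lt_top ?_⟩
    refine ((li_Icc (li_sq hc hr) c 0).union hi).mono_set ?_
    rintro t ⟨⟨h1, -⟩, -⟩
    rcases le_or_gt t 0 with h | h
    · exact Or.inl ⟨h1, h⟩
    · exact Or.inr h
  lpl := by
    intro κ
    obtain ⟨v, v1, hv, hn⟩ := hlpa ((κ : ℂ) * Complex.I)
    have hc : Continuous v := cont_of_int fun c x hcx => (hv c x hcx).1
    refine ⟨v, v1, H.sol_HS hr hq hv, fun hi => hn fun c _ => lint_lt_top ?_⟩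
    refine ((li_Icc (li_sq hc hr) 0 c).union hi).mono_set ?_
    rintro t ⟨⟨-, h1⟩, -⟩
    rcases le_or_gt t 0 with h | h
    · exact Or.inr h
    · exact Or.inl ⟨h.le, h1⟩

theorem selfadjoint_limit_point_both_endpoints
    (T : Set ℝ) (hne : T.Nonempty) (hcl : IsClosed T)
    (hfive : ∃ s : Finset ℝ, ↑s ⊆ T ∧ 5 ≤ s.card)
    (μ ν : Measure ℝ)
    (hμ : ∀ c d : ℝ, c ≤ d →
      μ (Set.Ioc c d) = ENNReal.ofReal (tsSigma (tsKappa T) d - tsSigma (tsKappa T) c))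
    (hν : ∀ c d : ℝ, c ≤ d → ν (Set.Ico c d) = ENNReal.ofReal (tsRho T d - tsRho T c))
    (p r q : ℝ → ℝ)
    (hr : LocallyIntegrable r μ) (hrpos : ∀ᵐ t ∂μ, 0 < r t)
    (hq : LocallyIntegrable q μ)
    (hpne : ∀ᵐ t ∂ν, p t ≠ 0) (hp : LocallyIntegrable (fun t => 1 / p t) ν)
    (hlpa : LimitPointLeft T μ p r q) (hlpb : LimitPointRight T μ p r q) :
    ∃ S : Lp ℂ 2 (wM T μ r) →ₗ.[ℂ] Lp ℂ 2 (wM T μ r),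
      Dense (S.domain : Set (Lp ℂ 2 (wM T μ r))) ∧ IsSelfAdjoint S ∧
      ∀ F G : Lp ℂ 2 (wM T μ r), (F, G) ∈ S.graph ↔
        ∃ u u1 h : ℝ → ℂ, MemD2 T μ p r q u u1 h ∧
          (∀ᵐ t ∂(wM T μ r), F t = u t) ∧
          (∀ᵐ t ∂(wM T μ r), G t = ellApply r q h u t) := by
  have hlf : IsLocallyFiniteMeasure μ := lf_of hμ
  have H : UT T := ⟨hcl, not_bddAbove_of_lp hr hlpb, not_bddBelow_of_lp hr hlpa⟩
  rw [H.kappa] at hμ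
  have C := mk_ctx H hμ hν hr hrpos hq hpne hp hlpa hlpb
  have hwM : wM T μ r = mm r μ := by
    rw [wM, mm, H.kappa, Measure.restrict_eq_self_of_ae_mem]
    exact H.mu_compl hμ
  rw [hwM]
  obtain ⟨S, h1, h2, h3⟩ := hilb_main C.GG (Ctx.G0 _ r q μ)
    (fun x ⟨u, u1, N, P, hu, _⟩ => ⟨u, u1, P, hu⟩) C.ha C.hb
    (fun F hF => C.hc (κ := 1) (by norm_num) F (by simpa using hF))
    (fun F hF => C.hc (κ := -1) (by norm_num) F (by simpa using hF)) C.hd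
  refine ⟨S, h1, h2, fun F G => ?_⟩
  rw [h3]
  simp only [mm_ae hr hrpos]
  constructor
  · rintro ⟨u, u1, P, hu⟩
    have hG : ∀ᵐ t ∂μ, G t = ellApply r q (dn r q u G) u t := by
      filter_upwards [hrpos] with t ht
      have : (r t : ℂ) ≠ 0 := by exact_mod_cast ht.ne'
      simp only [ellApply, dn]
      field_simp
      ring
    exact ⟨u, u1, dn r q u G, ⟨P.li, H.PR_pair P,
      (setLIntegral_le_lintegral _ _).trans_lt (lint_Lp hr F hu),
      (setLIntegral_le_lintegral _ _).trans_lt (lint_Lp hr G hG)⟩, hu, hG⟩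
  · rintro ⟨u, u1, h, ⟨hh, P, -, -⟩, hu, hG⟩
    refine ⟨u, u1, (H.pair_PR hh P).congr_h ?_, hu⟩
    filter_upwards [hrpos, hG] with t ht hGt
    have : (r t : ℂ) ≠ 0 := by exact_mod_cast ht.ne'
    change h t = (q t : ℂ) * u t - (r t : ℂ) * G t
    rw [hGt, ellApply]
    field_simp
    ring
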